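/- Van Lambalgen's theorem for correlated probability (main theorem): let P be a computable probability on X×Y = Ω². If y∞ ∈ R^{P_Y} and the conditional probability P(·|y∞) is computable relative to y∞, then R^{P(·|y∞),y∞} = R^P_{y∞}, i.e., x∞ is Martin-Löf random with respect to P(·|y∞) relative to the oracle y∞ if and only if (x∞,y∞) ∈ R^P. -/

import Mathlib

/-!
Both inclusions turn a test on one side into a test on the other.

*A test for `P` gives a test over `y∞`* (`random2_of_relMLRandom`). The fibre over `y∞` of a test
for `P` is r.e. relative to `y∞`; the point is to bound its measure. The strings `y` above which a
finite stage of level `2 n` has conditional probability more than `2⁻ⁿ` form an r.e. set, and by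
Markov's inequality, applied to the disjoint cylinders of its minimal elements, this set has
marginal measure at most `2⁻ⁿ`. Since `y∞` is random for the marginal, it has a prefix in this set
for only finitely many `n` (`not_mlRandom_of_frequently`). For all other `n`, letting `y → y∞` in
the bound on conditional probabilities shows that the fibre of level `2 n` has measure at most
`2⁻ⁿ` for `P(·|y∞)`. Hence the fibres, reindexed, form a test relative to `y∞`.

*A test over `y∞` gives a test for `P`* (`relMLRandom_of_random2`). The oracle enumeration of the
test and the oracle approximation of `P(·|y∞)` can be run over any `y`, where they need not mean
anything, so the measure has to be kept under control by a check that `y∞` passes. Each level over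
an oracle is cut into disjoint pieces `Δ(w)`, and the approximation claims for each piece an upper
bound of its conditional probability, with excess so small that over `y∞` the claims of a level
add up to less than `2 * 2⁻ⁿ`. The box `Δ(w, y)` is admitted when the claims read off from `y`, up
to the one for `w`, add up to at most `2 * 2⁻ⁿ`, and `P(w|y)` is less than the claim for `w`.

* Above an arbitrary `η`, claims do not depend on the prefix of `η` that was read, so the checks
  bound the sum of the admitted claims by `2 * 2⁻ⁿ` (`sum_claim_le`). Integrating over `η` bounds
  the `P`-measure of the admitted boxes by the same number (`measure_biUnion_le_of_fibre`).
* Over `y∞` the claims strictly exceed `P(w|y∞) = lim P(w|y)`, so each piece is admitted for some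
  prefix `y` of `y∞` (`exists_admitted`).

Computability is handled through step-bounded simulations: `exists_stage` replaces a partial
computable function by primitive recursive stages, and `exists_dyadic_bounds` replaces a computable
probability by primitive recursive dyadic lower and upper bounds. All the r.e. sets above are
projections of primitive recursive relations on such stages (`reSet_of_primrec`).
-/

open MeasureTheory Filter Set
open scoped ENNReal NNReal

namespace AlgRand

/-- `S` : finite binary strings. -/
abbrev S : Type := List Bool

/-- `Seq` : infinite binary sequences (the space Ω). -/
abbrev Seq : Type := ℕ → Bool

/-- A finite string is a prefix of an infinite sequence. -/
def PrefixSeq (x : S) (ω : Seq) : Prop := ∀ i : Fin x.length, x.get i = ω i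

/-- The first `n` bits of an infinite sequence. -/
def seqTake (ω : Seq) (n : ℕ) : S := List.ofFn fun i : Fin n => ω i

/-- Cylinder set Δ(x) ⊆ Ω. -/
def cyl (x : S) : Set Seq := {ω | PrefixSeq x ω}

/-- Product cylinder Δ(x,y) ⊆ Ω². -/
def cyl2 (xy : S × S) : Set (Seq × Seq) := cyl xy.1 ×ˢ cyl xy.2

/-- Prefix (partial order) on S². -/
def Pre2 (a b : S × S) : Prop := a.1 <+: b.1 ∧ a.2 <+: b.2

/-- A pair of strings is a (strict) prefix of a pair of sequences. -/
def Pre2Seq (a : S × S) (ω : Seq × Seq) : Prop := PrefixSeq a.1 ω.1 ∧ PrefixSeq a.2 ω.2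

/-- Recursively enumerable subset of a primcodable type. -/
def RESet {β : Type} [Primcodable β] (A : Set β) : Prop :=
  ∃ f : ℕ → Option β, Computable f ∧ A = {a | ∃ n, f n = some a}

/-- A computable probability measure on Ω. -/
def ComputableProb (P : Measure Seq) : Prop :=
  IsProbabilityMeasure P ∧
    ∃ p : S × ℕ → ℚ, Computable p ∧
      ∀ (x : S) (k : ℕ), 0 < k → |(P (cyl x)).toReal - (p (x, k) : ℝ)| < 1 / k

/-- A computable probability measure on Ω². -/
def ComputableProb2 (P : Measure (Seq × Seq)) : Prop :=
  IsProbabilityMeasure P ∧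
    ∃ p : (S × S) × ℕ → ℚ, Computable p ∧
      ∀ (xy : S × S) (k : ℕ), 0 < k → |(P (cyl2 xy)).toReal - (p (xy, k) : ℝ)| < 1 / k

/-- Ũ_n, the open set covered by the n-th level of a test. -/
def testUnion {α β : Type} (C : β → Set α) (U : Set (ℕ × β)) (n : ℕ) : Set α :=
  ⋃ x ∈ {x | (n, x) ∈ U}, C x

/-- Martin-Löf test w.r.t. a measure, generic in the cylinder function `C`. -/
def IsMLTest {α β : Type} [MeasurableSpace α] [Primcodable β]
    (C : β → Set α) (P : Measure α) (U : Set (ℕ × β)) : Prop :=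
  RESet U ∧ (∀ n, testUnion C U (n + 1) ⊆ testUnion C U n) ∧
    ∀ n, P (testUnion C U n) < (2⁻¹ : ℝ≥0∞) ^ n

/-- Martin-Löf randomness: ω avoids the limit of every test. -/
def MLRandom {α β : Type} [MeasurableSpace α] [Primcodable β]
    (C : β → Set α) (P : Measure α) (ω : α) : Prop :=
  ∀ U, IsMLTest C P U → ω ∉ ⋂ n, testUnion C U n

/-- ω ∈ R^P, for P on Ω. -/
abbrev Random1 (P : Measure Seq) (ω : Seq) : Prop := MLRandom cyl P ω

/-- ω ∈ R^P, for P on Ω². -/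
abbrev Random2 (P : Measure (Seq × Seq)) (ω : Seq × Seq) : Prop := MLRandom cyl2 P ω

/-- Marginal distribution P_X on the first coordinate. -/
noncomputable def margX (P : Measure (Seq × Seq)) : Measure Seq := P.map Prod.fst

/-- Marginal distribution P_Y on the second coordinate. -/
noncomputable def margY (P : Measure (Seq × Seq)) : Measure Seq := P.map Prod.snd

/-- Conditional probability P(x|y) = P(x,y)/P_Y(y), with value 0 when P_Y(y) = 0. -/
noncomputable def condP (P : Measure (Seq × Seq)) (x y : S) : ℝ :=
  (P (cyl2 (x, y))).toReal / (P (Set.univ ×ˢ cyl y)).toReal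

/-- P(x|yinf) := lim_{y → yinf} P(x|y) along prefixes of yinf (junk value if no limit). -/
noncomputable def condPLim (P : Measure (Seq × Seq)) (x : S) (yinf : Seq) : ℝ :=
  limUnder atTop fun m => condP P x (seqTake yinf m)

/-- Conditional probability P(y|x) = P(x,y)/P_X(x), with value 0 when P_X(x) = 0. -/
noncomputable def condX (P : Measure (Seq × Seq)) (y x : S) : ℝ :=
  (P (cyl2 (x, y))).toReal / (P (cyl x ×ˢ Set.univ)).toReal

/-- P(y|xinf) := lim_{x → xinf} P(y|x) along prefixes of xinf (junk value if no limit). -/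
noncomputable def condXLim (P : Measure (Seq × Seq)) (y : S) (xinf : Seq) : ℝ :=
  limUnder atTop fun m => condX P y (seqTake xinf m)

/-- The set S ∪ Ω of finite or infinite binary sequences. -/
inductive SW : Type where
  | fin : S → SW
  | inf : Seq → SW

/-- Prefix order ⊑ on S ∪ Ω. -/
def SW.le : SW → SW → Prop
  | .fin x, .fin y => x <+: y
  | .fin x, .inf ω => PrefixSeq x ω
  | .inf ω, .inf ω' => ω = ω'
  | .inf _, .fin _ => False

/-- (S ∪ Ω)². -/
abbrev SW2 : Type := SW × SW

/-- Componentwise prefix order ⊑ on (S ∪ Ω)². -/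
def SW2.le (a b : SW2) : Prop := SW.le a.1 b.1 ∧ SW.le a.2 b.2

/-- Length |x| ∈ ℕ∞ of an element of S ∪ Ω. -/
def SW.len : SW → ℕ∞
  | .fin x => (x.length : ℕ∞)
  | .inf _ => ⊤

/-- |p| = |p₁| + |p₂| for p ∈ (S ∪ Ω)². -/
def SW2.len (a : SW2) : ℕ∞ := SW.len a.1 + SW.len a.2

/-- Δ(x) for x ∈ S ∪ Ω. -/
def SW.cylW : SW → Set Seq
  | .fin x => cyl x
  | .inf ω => {ω}

/-- Δ(x,y) for (x,y) ∈ (S ∪ Ω)². -/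
def SW2.cylW (a : SW2) : Set (Seq × Seq) := SW.cylW a.1 ×ˢ SW.cylW a.2

/-- Embedding S → S ∪ Ω. -/
def emb1 (x : S) : SW := SW.fin x

/-- Embedding S² → (S ∪ Ω)². -/
def emb2 (p : S × S) : SW2 := (SW.fin p.1, SW.fin p.2)

/-- Embedding Ω² → (S ∪ Ω)². -/
def inf2 (ω : Seq × Seq) : SW2 := (SW.inf ω.1, SW.inf ω.2)

/-- Least upper bound with respect to a relation. -/
def IsSupRel {V : Type} (le : V → V → Prop) (A : Set V) (s : V) : Prop :=
  (∀ a ∈ A, le a s) ∧ ∀ b, (∀ a ∈ A, le a b) → le s b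

/-- `f` is a computable monotone function defined by an r.e. set `F` satisfying
condition (3) of the paper:  (λ,λ) ∈ F_p and ⋁_{p'⊑p} F_{p'} exists for every p,
and f(q) = ⋁ {x : ∃ p' ⊑ q, (p',x) ∈ F}. -/
def CompMono {D E : Type} {W V : Type} [Primcodable D] [Primcodable E]
    (embD : D → W) (leW : W → W → Prop) (embE : E → V) (leV : V → V → Prop)
    (eps : E) (f : W → V) : Prop :=
  ∃ F : Set (D × E), RESet F ∧
    (∀ p : D, (p, eps) ∈ F ∧
        ∃ s, IsSupRel leV (embE '' {x | ∃ p' : D, leW (embD p') (embD p) ∧ (p', x) ∈ F}) s) ∧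
    ∀ q : W, IsSupRel leV (embE '' {x | ∃ p' : D, leW (embD p') q ∧ (p', x) ∈ F}) (f q)

/-- Computable monotone function (S ∪ Ω)² → (S ∪ Ω)². -/
def CompMono22 (f : SW2 → SW2) : Prop := CompMono emb2 SW2.le emb2 SW2.le (([], []) : S × S) f

/-- Computable monotone function S ∪ Ω → (S ∪ Ω)². -/
def CompMono12 (g : SW → SW2) : Prop := CompMono emb1 SW.le emb2 SW2.le (([], []) : S × S) g

/-- Computable monotone function (S ∪ Ω)² → S ∪ Ω. -/
def CompMono21 (e : SW2 → SW) : Prop := CompMono emb2 SW2.le emb1 SW.le ([] : S) e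

/-- Computable monotone function S ∪ Ω → S ∪ Ω. -/
def CompMono11 (ρ : SW → SW) : Prop := CompMono emb1 SW.le emb1 SW.le ([] : S) ρ

/-- Km²_f(x) := min{|p₁|+|p₂| : x ⊑ f(p₁,p₂)} ∈ ℕ∞. -/
noncomputable def Km2 (f : SW2 → SW2) (x : SW2) : ℕ∞ :=
  ⨅ (p : SW2) (_ : SW2.le x (f p)), SW2.len p

/-- Km_f(x) := min{|p| : x ⊑ f(p,λ)} ∈ ℕ∞. -/
noncomputable def Km1 (f : SW2 → SW2) (x : SW2) : ℕ∞ :=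
  ⨅ (p : SW) (_ : SW2.le x (f (p, SW.fin []))), SW.len p

/-- Km(x|y) := min{|p| : (x,λ) ⊑ u(p,y)} ∈ ℕ∞. -/
noncomputable def KmCond (u : SW2 → SW2) (x y : SW) : ℕ∞ :=
  ⨅ (p : SW) (_ : SW2.le (x, SW.fin []) (u (p, y))), SW.len p

/-- Km_g(x) := min{|p| : x ⊑ g(p)} for g : S ∪ Ω → (S ∪ Ω)². -/
noncomputable def KmOf12 (g : SW → SW2) (x : SW2) : ℕ∞ :=
  ⨅ (p : SW) (_ : SW2.le x (g p)), SW.len p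

/-- Optimality of a computable monotone function on (S ∪ Ω)². -/
def Optimal (u : SW2 → SW2) : Prop :=
  CompMono22 u ∧
    ∀ f : SW2 → SW2, CompMono22 f → ∃ c : ℕ, ∀ x : SW2, Km2 u x ≤ Km2 f x + (c : ℕ∞)

/-- 2^{-n} for n ∈ ℕ∞ (with 2^{-∞} = 0), as an extended nonnegative real. -/
noncomputable def tpow (n : ℕ∞) : ℝ≥0∞ := if n = ⊤ then 0 else (2⁻¹ : ℝ≥0∞) ^ n.toNat

/-- Non-overlapping subset of (S ∪ Ω)². -/
def NonOverlapW (A : Set SW2) : Prop := A.Pairwise fun a b => SW2.cylW a ∩ SW2.cylW b = ∅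

/-- Non-overlapping subset of S². -/
def NonOverlapF (A : Set (S × S)) : Prop := A.Pairwise fun a b => cyl2 a ∩ cyl2 b = ∅

/-- Condition (4): any two members of A are comparable or have disjoint cylinders. -/
def Cond4 (A : Set (S × S)) : Prop :=
  ∀ a ∈ A, ∀ b ∈ A, Pre2 a b ∨ Pre2 b a ∨ cyl2 a ∩ cyl2 b = ∅

/-- Condition (5): relative complements of cylinders are non-overlapping unions within A. -/
def Cond5 (A : Set (S × S)) : Prop :=
  ∀ a ∈ A, ∀ b ∈ A, ∃ α ⊆ A, NonOverlapF α ∧ cyl2 a ∩ (cyl2 b)ᶜ = ⋃ z ∈ α, cyl2 z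

/-- A(xinf) := {x ∈ A | x ⊏ xinf}. -/
def Asec (A : Set (S × S)) (ω : Seq × Seq) : Set (S × S) := {a ∈ A | Pre2Seq a ω}

/-- sup_{x ∈ A} (−log P(x) − K(x)) < ∞. -/
def KmBound (P : Measure (Seq × Seq)) (K : S × S → ℕ∞) (A : Set (S × S)) : Prop :=
  ∃ c : ℝ, ∀ x ∈ A, ∀ k : ℕ, K x = (k : ℕ∞) →
    0 < P (cyl2 x) ∧ -Real.logb 2 ((P (cyl2 x)).toReal) ≤ (k : ℝ) + c

/-- sup_{x ∈ A} |log P(x) + K(x)| < ∞. -/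
def KmBoundAbs (P : Measure (Seq × Seq)) (K : S × S → ℕ∞) (A : Set (S × S)) : Prop :=
  ∃ c : ℝ, ∀ x ∈ A, ∃ k : ℕ, K x = (k : ℕ∞) ∧ 0 < P (cyl2 x) ∧
    |Real.logb 2 ((P (cyl2 x)).toReal) + (k : ℝ)| ≤ c

/-- The conditional probability P(·|yinf) is computable relative to the oracle yinf:
there is a partial computable A(x,y,k), monotone in y, approximating P(x|yinf)
to within 1/k along prefixes y of yinf. -/
def CondComputableAt (P : Measure (Seq × Seq)) (yinf : Seq) : Prop :=
  ∃ A : (S × S) × ℕ →. ℚ, Partrec A ∧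
    (∀ (x y z : S) (k : ℕ) (q : ℚ), q ∈ A ((x, y), k) → y <+: z → q ∈ A ((x, z), k)) ∧
    ∀ (x : S) (k : ℕ), 0 < k → ∃ (m : ℕ) (q : ℚ), q ∈ A ((x, seqTake yinf m), k) ∧
      |condPLim P x yinf - (q : ℝ)| < 1 / k

/-- A Martin-Löf test w.r.t. Q which is r.e. relative to the oracle yinf. -/
def RelMLTest (Q : Measure Seq) (yinf : Seq) (U : ℕ → Set S) : Prop :=
  (∃ B : (ℕ × ℕ) × S →. S, Partrec B ∧
      (∀ (i n : ℕ) (y z x : S), x ∈ B ((i, n), y) → y <+: z → x ∈ B ((i, n), z)) ∧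
      ∀ n, U n = {x | ∃ i m, x ∈ B ((i, n), seqTake yinf m)}) ∧
  (∀ n, (⋃ x ∈ U (n + 1), cyl x) ⊆ ⋃ x ∈ U n, cyl x) ∧
  ∀ n, Q (⋃ x ∈ U n, cyl x) < (2⁻¹ : ℝ≥0∞) ^ n

/-- Martin-Löf randomness w.r.t. Q relative to the oracle yinf. -/
def RelMLRandom (Q : Measure Seq) (yinf xinf : Seq) : Prop :=
  ∀ U, RelMLTest Q yinf U → xinf ∉ ⋂ n, ⋃ x ∈ U n, cyl x

/-- Likelihood ratio r(x) = Q(x)/P(x), with value 0 when P(x) = 0. -/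
noncomputable def ratio (P Q : Measure Seq) (x : S) : ℝ :=
  (Q (cyl x)).toReal / (P (cyl x)).toReal

/-- P(·|yinf) f,(xinf,yinf)-effectively converges with rate g. -/
def EffConv (P : Measure (Seq × Seq)) (xinf yinf : Seq) (f : ℕ → ℚ) (g : ℕ → ℕ) : Prop :=
  Computable g ∧ Monotone g ∧
    ∀ x y : S, PrefixSeq x xinf → PrefixSeq y yinf → g x.length ≤ y.length →
      |condP P x y / condPLim P x yinf - 1| < (f x.length : ℝ)

/-- A_g(xinf,yinf) := {(x,y) : |y| = g(|x|), (x,y) ⊏ (xinf,yinf)}. -/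
def AgSec (g : ℕ → ℕ) (xinf yinf : Seq) : Set (S × S) :=
  {xy | xy.2.length = g xy.1.length ∧ PrefixSeq xy.1 xinf ∧ PrefixSeq xy.2 yinf}

/-- A uniformly computable family of probability measures on Ω. -/
def UnifComputableFam (Pn : ℕ → Measure Seq) : Prop :=
  (∀ n, IsProbabilityMeasure (Pn n)) ∧
    ∃ A : (ℕ × S) × ℕ → ℚ, Computable A ∧
      ∀ (n : ℕ) (x : S) (k : ℕ), 0 < k →
        |(A ((n, x), k) : ℝ) - ((Pn n) (cyl x)).toReal| < 1 / k

/-- A computable sequence of reals (e.g. a computable probability on ℕ). -/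
def ComputableRealSeq (α : ℕ → ℝ) : Prop :=
  ∃ a : ℕ × ℕ → ℚ, Computable a ∧ ∀ (n k : ℕ), 0 < k → |α n - (a (n, k) : ℝ)| < 1 / k

/-- The mixture Σ_n α(n) P_n. -/
noncomputable def mixture (α : ℕ → ℝ) (Pn : ℕ → Measure Seq) : Measure Seq :=
  Measure.sum fun n => ENNReal.ofReal (α n) • Pn n

/-- The conditional probability measure P(·|y) on Ω, for a finite string y. -/
noncomputable def condMeasGivenY (P : Measure (Seq × Seq)) (y : S) : Measure Seq :=
  (P (Set.univ ×ˢ cyl y))⁻¹ • ((P.restrict (Set.univ ×ˢ cyl y)).map Prod.fst)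

/-- The posterior distribution P_{Y|X}(·|x) on Ω, for a finite string x. -/
noncomputable def postMeas (P : Measure (Seq × Seq)) (x : S) : Measure Seq :=
  (P (cyl x ×ˢ Set.univ))⁻¹ • ((P.restrict (cyl x ×ˢ Set.univ)).map Prod.snd)

/-! ### Rational approximations and step-bounded simulation -/

/-- The pair code of a rational number: numerator and denominator. -/
def ratCode (q : ℚ) : ℕ := Nat.pair (Encodable.encode q.num) q.den

theorem natAbs_of_encode (z : ℤ) : z.natAbs = (Encodable.encode z + 1) / 2 := by
  cases z with
  | ofNat n => show n = (2 * n + 1) / 2; omega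
  | negSucc n => show n + 1 = (2 * n + 1 + 1) / 2; omega

theorem toNat_of_encode (z : ℤ) :
    z.toNat = if Encodable.encode z % 2 = 0 then Encodable.encode z / 2 else 0 := by
  cases z with
  | ofNat n =>
    show n = if (2 * n) % 2 = 0 then (2 * n) / 2 else 0
    rw [if_pos (by omega)]; omega
  | negSucc n =>
    show 0 = if (2 * n + 1) % 2 = 0 then (2 * n + 1) / 2 else 0
    rw [if_neg (by omega)]

theorem ratCode_injective : Function.Injective ratCode := by
  intro q r h
  have h' := congrArg Nat.unpair h
  simp only [ratCode, Nat.unpair_pair, Prod.mk.injEq] at h'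
  exact Rat.ext (Encodable.encode_injective h'.1) h'.2

/-- `e` is the pair code of some rational. -/
def IsRatCode (e : ℕ) : Prop :=
  0 < e.unpair.2 ∧ Nat.Coprime ((e.unpair.1 + 1) / 2) e.unpair.2

instance : DecidablePred IsRatCode := fun _ => inferInstanceAs (Decidable (_ ∧ _))

theorem isRatCode_iff (e : ℕ) : IsRatCode e ↔ e ∈ Set.range ratCode := by
  constructor
  · rintro ⟨h1, h2⟩
    obtain ⟨z, hz⟩ : ∃ z : ℤ, Encodable.encode z = e.unpair.1 :=
      ⟨Denumerable.ofNat ℤ e.unpair.1, Denumerable.encode_ofNat _⟩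
    rw [← hz, ← natAbs_of_encode] at h2
    refine ⟨⟨z, e.unpair.2, h1.ne', h2⟩, ?_⟩
    simp only [ratCode, hz, Nat.pair_unpair]
  · rintro ⟨q, rfl⟩
    simp only [IsRatCode, ratCode, Nat.unpair_pair, ← natAbs_of_encode]
    exact ⟨q.den_pos, q.reduced⟩

theorem encode_rat (q : ℚ) :
    @Encodable.encode ℚ Primcodable.toEncodable q =
      (List.range (ratCode q)).countP (fun e => decide (IsRatCode e)) := by
  have : @Encodable.encode ℚ Primcodable.toEncodable q = (List.range (ratCode q)).countP
      (fun e => @decide (e ∈ Set.range (@Encodable.encode ℚ Rat.instEncodable))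
        (@Encodable.decidableRangeEncode ℚ Rat.instEncodable e)) := by
    rfl
  refine this.trans ?_
  congr 1
  funext e
  rw [decide_eq_decide, isRatCode_iff]
  rfl

theorem primrecPred_isRatCode : PrimrecPred IsRatCode := by
  have hdvd : PrimrecRel fun a b : ℕ => a ∣ b :=
    (Primrec.eq.comp (Primrec.nat_mod.comp Primrec.snd Primrec.fst) (Primrec.const 0)).of_eq
      fun p => (Nat.dvd_iff_mod_eq_zero).symm
  have hR : PrimrecRel fun (k : ℕ) (p : ℕ × ℕ) => ¬ (k ∣ p.1 ∧ k ∣ p.2 ∧ k ≠ 1) := by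
    refine PrimrecPred.not (PrimrecPred.and ?_ (PrimrecPred.and ?_ (PrimrecPred.not ?_)))
    · exact hdvd.comp Primrec.fst (Primrec.fst.comp Primrec.snd)
    · exact hdvd.comp Primrec.fst (Primrec.snd.comp Primrec.snd)
    · exact Primrec.eq.comp Primrec.fst (Primrec.const 1)
  have h1 : Primrec fun e : ℕ => e.unpair.1 := Primrec.fst.comp Primrec.unpair
  have h2 : Primrec fun e : ℕ => e.unpair.2 := Primrec.snd.comp Primrec.unpair
  have h3 : Primrec fun e : ℕ => (e.unpair.1 + 1) / 2 :=
    Primrec.nat_div.comp (Primrec.succ.comp h1) (Primrec.const 2)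
  refine ((Primrec.nat_lt.comp (Primrec.const 0) h2).and
    (hR.forall_mem_list.comp (Primrec.list_range.comp (Primrec.succ.comp h2))
      (h3.pair h2))).of_eq fun e => ?_
  simp only [List.mem_range]
  refine and_congr_right fun hpos => ?_
  constructor
  · intro h
    by_contra hc
    exact h _ (Nat.lt_succ_iff.2 (Nat.le_of_dvd hpos (Nat.gcd_dvd_right _ _)))
      ⟨Nat.gcd_dvd_left _ _, Nat.gcd_dvd_right _ _, hc⟩
  · rintro h k - ⟨ha, hb, hk⟩
    exact hk (Nat.dvd_one.1 (h ▸ Nat.dvd_gcd ha hb))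

/-- Mathlib codes a rational by the rank of its pair code, so the pair code is recovered by
searching for the element of that rank. -/
theorem computable_ratCode : Computable ratCode := by
  have hc : Primrec fun e : ℕ => (List.range e).countP (fun e => decide (IsRatCode e)) :=
    (Primrec.list_length.comp (Primrec.listFilter primrecPred_isRatCode |>.comp
      Primrec.list_range)).of_eq fun e => by rw [List.countP_eq_length_filter]
  have hP : PrimrecPred fun p : ℚ × ℕ => IsRatCode p.2 ∧
      (List.range p.2).countP (fun e => decide (IsRatCode e)) =
        @Encodable.encode ℚ Primcodable.toEncodable p.1 :=
    (primrecPred_isRatCode.comp Primrec.snd).and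
      (Primrec.eq.comp (hc.comp Primrec.snd) (Primrec.encode.comp Primrec.fst))
  have hex : ∀ q : ℚ, ∃ e, IsRatCode e ∧
      (List.range e).countP (fun e => decide (IsRatCode e)) =
        @Encodable.encode ℚ Primcodable.toEncodable q := fun q =>
    ⟨ratCode q, (isRatCode_iff _).2 ⟨q, rfl⟩, (encode_rat q).symm⟩
  refine (Computable.find hP.computablePred hex).of_eq fun q => ?_
  obtain ⟨h1, h2⟩ := Nat.find_spec (hex q)
  obtain ⟨r, hr⟩ := (isRatCode_iff _).1 h1
  rw [← hr, ← encode_rat] at h2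
  rw [← hr, @Encodable.encode_injective ℚ Primcodable.toEncodable _ _ h2]

/-- Dyadic rounding of the positive part of a rational is computable. -/
theorem computable_round : Computable₂ fun (q : ℚ) (m : ℕ) => q.num.toNat * m / q.den := by
  have h : Primrec₂ fun (e m : ℕ) =>
      (if e.unpair.1 % 2 = 0 then e.unpair.1 / 2 else 0) * m / e.unpair.2 := by
    have h1 : Primrec fun p : ℕ × ℕ => p.1.unpair.1 :=
      Primrec.fst.comp (Primrec.unpair.comp Primrec.fst)
    have h2 : Primrec fun p : ℕ × ℕ => p.1.unpair.2 :=
      Primrec.snd.comp (Primrec.unpair.comp Primrec.fst)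
    refine Primrec.nat_div.comp (Primrec.nat_mul.comp (Primrec.ite ?_ ?_ (Primrec.const 0))
      Primrec.snd) h2
    · exact Primrec.eq.comp (Primrec.nat_mod.comp h1 (Primrec.const 2)) (Primrec.const 0)
    · exact Primrec.nat_div.comp h1 (Primrec.const 2)
  refine (h.to_comp.comp (computable_ratCode.comp Computable.fst) Computable.snd).of_eq ?_
  rintro ⟨q, m⟩
  simp only [ratCode, Nat.unpair_pair, toNat_of_encode]

theorem round_bounds (q : ℚ) (m : ℕ) :
    ((q.num.toNat * m / q.den : ℕ) : ℝ) ≤ max (q : ℝ) 0 * m ∧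
      (q : ℝ) * m < ((q.num.toNat * m / q.den : ℕ) : ℝ) + 1 := by
  have hd : (0 : ℝ) < q.den := by exact_mod_cast q.den_pos
  have hq : max (q : ℝ) 0 = (q.num.toNat : ℝ) / q.den := by
    have h1 : ((q.num.toNat : ℤ) : ℝ) = max (q.num : ℝ) 0 := by
      rw [Int.toNat_eq_max]; push_cast; rfl
    have h2 : (q.num.toNat : ℝ) = max (q.num : ℝ) 0 := by exact_mod_cast h1
    rw [h2, ← max_div_div_right hd.le, zero_div]
    congr 1
    exact_mod_cast (Rat.num_div_den q).symm
  have e : max (q : ℝ) 0 * m = ((q.num.toNat * m : ℕ) : ℝ) / q.den := by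
    rw [hq]; push_cast; ring
  constructor
  · rw [e]; exact Nat.cast_div_le
  · refine lt_of_le_of_lt (mul_le_mul_of_nonneg_right (le_max_left _ 0) (Nat.cast_nonneg m)) ?_
    rw [e, div_lt_iff₀ hd]
    have := Nat.lt_div_mul_add (a := q.num.toNat * m) q.den_pos
    rw [add_mul, one_mul]
    exact_mod_cast this

/-- Step-bounded simulation: a partial recursive function is the union of an increasing sequence
of uniformly primitive recursive finite approximations. -/
theorem exists_stage {α σ : Type} [Primcodable α] [Primcodable σ] {g : α →. σ} (hg : Partrec g) :
    ∃ G : ℕ → α → Option σ, Primrec₂ G ∧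
      (∀ s t a b, s ≤ t → G s a = some b → G t a = some b) ∧
      ∀ a b, b ∈ g a ↔ ∃ s, G s a = some b := by
  obtain ⟨c, hc⟩ := Nat.Partrec.Code.exists_code.1 hg
  refine ⟨fun s a => (c.evaln s (Encodable.encode a)).bind fun m => Encodable.decode m, ?_, ?_, ?_⟩
  · refine Primrec.option_bind ?_ (Primrec.decode.comp Primrec.snd)
    exact Nat.Partrec.Code.primrec_evaln.comp
      ((Primrec.fst.pair (Primrec.const c)).pair (Primrec.encode.comp Primrec.snd))
  · intro s t a b hst h
    obtain ⟨m, hm, hb⟩ := Option.bind_eq_some_iff.1 h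
    exact Option.bind_eq_some_iff.2 ⟨m, Nat.Partrec.Code.evaln_mono hst hm, hb⟩
  · intro a b
    have key : ∀ m, m ∈ c.eval (Encodable.encode a) ↔ ∃ b ∈ g a, Encodable.encode b = m := by
      intro m
      rw [hc]
      simp [Encodable.encodek, Part.mem_map_iff]
    constructor
    · intro hb
      obtain ⟨s, hs⟩ := Nat.Partrec.Code.evaln_complete.1 ((key _).2 ⟨b, hb, rfl⟩)
      exact ⟨s, Option.bind_eq_some_iff.2 ⟨_, hs, Encodable.encodek b⟩⟩
    · rintro ⟨s, hs⟩
      obtain ⟨m, hm, hb⟩ := Option.bind_eq_some_iff.1 hs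
      obtain ⟨b', hb', rfl⟩ := (key _).1 (Nat.Partrec.Code.evaln_sound hm)
      rw [Encodable.encodek] at hb
      exact Option.some.inj hb ▸ hb'

theorem reSet_of_primrec {β : Type} [Primcodable β] {R : ℕ → β → Prop}
    (hR : PrimrecRel R) : RESet {b | ∃ s, R s b} := by
  classical
  let f : ℕ → Option β := fun n =>
    (Encodable.decode (α := β) n.unpair.2).bind fun b => if R n.unpair.1 b then some b else none
  have hf : Primrec f := by
    refine Primrec.option_bind (Primrec.decode.comp (Primrec.snd.comp Primrec.unpair)) ?_
    refine Primrec.ite ?_ (Primrec.option_some.comp Primrec.snd) (Primrec.const none)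
    exact hR.comp (Primrec.fst.comp (Primrec.unpair.comp Primrec.fst)) Primrec.snd
  refine ⟨f, hf.to_comp, ?_⟩
  ext b
  constructor
  · rintro ⟨s, hs⟩
    exact ⟨Nat.pair s (Encodable.encode b), by simp [f, hs]⟩
  · rintro ⟨n, hn⟩
    obtain ⟨b', -, hb⟩ := Option.bind_eq_some_iff.1 hn
    split_ifs at hb with h
    cases hb
    exact ⟨_, h⟩

theorem RESet.exists_primrec {β : Type} [Primcodable β] {A : Set β} (hA : RESet A) :
    ∃ F : ℕ → Option β, Primrec F ∧ A = {b | ∃ n, F n = some b} := by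
  obtain ⟨f, hf, rfl⟩ := hA
  obtain ⟨G, hG, -, hGf⟩ := exists_stage hf.partrec
  refine ⟨fun n => (G n.unpair.1 n.unpair.2).bind id, ?_, ?_⟩
  · refine Primrec.option_bind ?_ Primrec.snd
    exact hG.comp (Primrec.fst.comp Primrec.unpair) (Primrec.snd.comp Primrec.unpair)
  · ext b
    constructor
    · rintro ⟨n, hn⟩
      obtain ⟨s, hs⟩ := (hGf n (some b)).1 (by rw [← hn]; exact Part.mem_some _)
      exact ⟨Nat.pair s n, by simp [hs]⟩
    · rintro ⟨n, hn⟩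
      obtain ⟨o, ho, hb⟩ := Option.bind_eq_some_iff.1 hn
      have : o ∈ ((f : ℕ →. Option β) n.unpair.2) := (hGf _ _).2 ⟨_, ho⟩
      refine ⟨n.unpair.2, ?_⟩
      have h2 := Part.mem_some_iff.1 this
      rw [← h2]; exact hb

/-! ### Strings, cylinders and tests -/

@[simp] theorem length_seqTake (ω : Seq) (n : ℕ) : (seqTake ω n).length = n := by
  simp [seqTake]

theorem mem_cyl_iff {ω : Seq} {x : S} :
    ω ∈ cyl x ↔ ∀ (i : ℕ) (h : i < x.length), x[i] = ω i :=
  ⟨fun h i hi => h ⟨i, hi⟩, fun h i => h i i.2⟩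

theorem mem_cyl_iff_seqTake {ω : Seq} {x : S} : ω ∈ cyl x ↔ seqTake ω x.length = x := by
  rw [mem_cyl_iff]
  constructor
  · intro h
    refine List.ext_getElem (by simp) fun i h1 h2 => ?_
    rw [h i h2]
    simp [seqTake]
  · intro h i hi
    have h1 : i < (seqTake ω x.length).length := by simpa using hi
    have h2 : (seqTake ω x.length)[i] = x[i] := by simp only [h]
    rw [← h2]
    simp [seqTake]

theorem mem_cyl_seqTake (ω : Seq) (n : ℕ) : ω ∈ cyl (seqTake ω n) := by
  rw [mem_cyl_iff_seqTake, length_seqTake]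

theorem take_seqTake (ω : Seq) {m n : ℕ} (h : m ≤ n) : (seqTake ω n).take m = seqTake ω m := by
  refine List.ext_getElem (by simp [h]) fun i h1 h2 => ?_
  simp [seqTake]

theorem prefix_iff_take {x y : S} : x <+: y ↔ y.take x.length = x :=
  ⟨fun h => (List.prefix_iff_eq_take.1 h).symm, fun h => List.prefix_iff_eq_take.2 h.symm⟩

theorem seqTake_prefix (ω : Seq) {m n : ℕ} (h : m ≤ n) : seqTake ω m <+: seqTake ω n := by
  rw [prefix_iff_take, length_seqTake, take_seqTake ω h]

theorem prefix_seqTake_iff {x : S} {ω : Seq} {n : ℕ} :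
    x <+: seqTake ω n ↔ ω ∈ cyl x ∧ x.length ≤ n := by
  constructor
  · intro h
    have hl : x.length ≤ n := by simpa using h.length_le
    rw [prefix_iff_take, take_seqTake ω hl] at h
    exact ⟨mem_cyl_iff_seqTake.2 h, hl⟩
  · rintro ⟨h, hl⟩
    rw [prefix_iff_take, take_seqTake ω hl]
    exact mem_cyl_iff_seqTake.1 h

theorem cyl_subset {x y : S} (h : x <+: y) : cyl y ⊆ cyl x := by
  intro ω hω
  rw [mem_cyl_iff_seqTake] at hω
  rw [← hω, prefix_seqTake_iff] at h
  exact h.1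

theorem prefix_of_mem_cyl {x y : S} {ω : Seq} (hx : ω ∈ cyl x) (hy : ω ∈ cyl y)
    (h : x.length ≤ y.length) : x <+: y := by
  rw [← mem_cyl_iff_seqTake.1 hy, prefix_seqTake_iff]
  exact ⟨hx, h⟩

theorem eq_of_mem_cyl {x y : S} {ω : Seq} (hx : ω ∈ cyl x) (hy : ω ∈ cyl y)
    (h : x.length = y.length) : x = y :=
  (prefix_of_mem_cyl hx hy h.le).eq_of_length h

@[simp] theorem cyl_nil : cyl [] = Set.univ := by
  ext ω; simp [mem_cyl_iff]

theorem measurableSet_cyl (x : S) : MeasurableSet (cyl x) := by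
  have : cyl x = ⋂ i : Fin x.length, (fun ω : Seq => ω i) ⁻¹' {x.get i} := by
    ext ω
    simp only [cyl, PrefixSeq, Set.mem_ofPred_eq, Set.mem_iInter, Set.mem_preimage,
      Set.mem_singleton_iff]
    exact forall_congr' fun i => eq_comm
  rw [this]
  exact MeasurableSet.iInter fun i => measurable_pi_apply _ (MeasurableSet.singleton _)

theorem measurableSet_cyl2 (a : S × S) : MeasurableSet (cyl2 a) :=
  (measurableSet_cyl _).prod (measurableSet_cyl _)

theorem mem_testUnion {α β : Type} {C : β → Set α} {U : Set (ℕ × β)} {n : ℕ} {ω : α} :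
    ω ∈ testUnion C U n ↔ ∃ b, (n, b) ∈ U ∧ ω ∈ C b := by
  simp [testUnion]

/-- The shortest strings of `W`, whose cylinders partition the union of the cylinders of `W`. -/
def minimals (W : Set S) : Set S := {y ∈ W | ∀ y' ∈ W, y' <+: y → y' = y}

theorem exists_minimal {W : Set S} {ω : Seq} {y : S} (hy : y ∈ W) (hω : ω ∈ cyl y) :
    ∃ y' ∈ minimals W, ω ∈ cyl y' := by
  classical
  have hex : ∃ n, ∃ y ∈ W, ω ∈ cyl y ∧ y.length = n := ⟨_, y, hy, hω, rfl⟩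
  obtain ⟨y', hy', hω', hl⟩ := Nat.find_spec hex
  refine ⟨y', ⟨hy', fun z hz hzy => ?_⟩, hω'⟩
  exact hzy.eq_of_length_le (hl ▸ Nat.find_min' hex ⟨z, hz, cyl_subset hzy hω', rfl⟩)

theorem eq_of_mem_minimals {W : Set S} {ω : Seq} {y z : S} (hy : y ∈ minimals W)
    (hz : z ∈ minimals W) (hωy : ω ∈ cyl y) (hωz : ω ∈ cyl z) : y = z := by
  rcases le_total y.length z.length with h | h
  · exact hz.2 _ hy.1 (prefix_of_mem_cyl hωy hωz h)
  · exact (hy.2 _ hz.1 (prefix_of_mem_cyl hωz hωy h)).symm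

theorem two_inv_pow_ne_zero (n : ℕ) : (2⁻¹ : ℝ≥0∞) ^ n ≠ 0 :=
  pow_ne_zero _ (by simp)

theorem two_inv_pow_ne_top (n : ℕ) : (2⁻¹ : ℝ≥0∞) ^ n ≠ ⊤ :=
  ENNReal.pow_ne_top (by simp)

theorem two_inv_pow_succ_lt (n : ℕ) : (2⁻¹ : ℝ≥0∞) ^ (n + 1) < 2⁻¹ ^ n := by
  rw [pow_succ]
  conv_rhs => rw [← mul_one ((2⁻¹ : ℝ≥0∞) ^ n)]
  exact ENNReal.mul_lt_mul_right (two_inv_pow_ne_zero n) (two_inv_pow_ne_top n)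
    (by simp)

theorem two_inv_pow_anti {m n : ℕ} (h : m ≤ n) : (2⁻¹ : ℝ≥0∞) ^ n ≤ 2⁻¹ ^ m :=
  pow_le_pow_of_le_one (by simp) (by simp) h

/-- Solovay-style criterion: a point lying in infinitely many levels of a uniformly r.e. sequence
of open sets of measure at most `2 * 2⁻ⁿ` is not Martin-Löf random. No nesting is required, since
the unions of the tails form a test. -/
theorem not_mlRandom_of_frequently {α β : Type} [MeasurableSpace α] [Primcodable β]
    {C : β → Set α} {P : Measure α} {ω : α} {W : Set (ℕ × β)} (hW : RESet W)
    (hμ : ∀ n, P (testUnion C W n) ≤ 2 * 2⁻¹ ^ n)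
    (hω : ∀ N, ∃ n ≥ N, ω ∈ testUnion C W n) : ¬ MLRandom C P ω := by
  intro hr
  let U : Set (ℕ × β) := {a | ∃ m, a.1 + 3 ≤ m ∧ (m, a.2) ∈ W}
  have hU : ∀ n, testUnion C U n = ⋃ k, testUnion C W (n + 3 + k) := by
    intro n
    ext x
    simp only [mem_testUnion, Set.mem_iUnion]
    constructor
    · rintro ⟨b, ⟨m, hm, hb⟩, hx⟩
      obtain ⟨k, rfl⟩ := Nat.exists_eq_add_of_le hm
      exact ⟨k, b, hb, hx⟩
    · rintro ⟨k, b, hb, hx⟩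
      exact ⟨b, ⟨_, Nat.le_add_right _ k, hb⟩, hx⟩
  refine hr U ⟨?_, ?_, ?_⟩ ?_
  · obtain ⟨F, hF, rfl⟩ := hW.exists_primrec
    have hR : PrimrecRel fun (s : ℕ) (a : ℕ × β) =>
        a.1 + 3 ≤ s.unpair.2 ∧ F s.unpair.1 = some (s.unpair.2, a.2) := by
      refine PrimrecPred.and ?_ ?_
      · exact Primrec.nat_le.comp (Primrec.nat_add.comp (Primrec.fst.comp Primrec.snd)
          (Primrec.const 3)) (Primrec.snd.comp (Primrec.unpair.comp Primrec.fst))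
      · refine Primrec.eq.comp (hF.comp (Primrec.fst.comp (Primrec.unpair.comp Primrec.fst))) ?_
        exact Primrec.option_some.comp ((Primrec.snd.comp (Primrec.unpair.comp Primrec.fst)).pair
          (Primrec.snd.comp Primrec.snd))
    convert reSet_of_primrec hR using 1
    ext ⟨n, b⟩
    constructor
    · rintro ⟨m, hm, j, hj⟩
      exact ⟨Nat.pair j m, by simpa using hm, by simpa using hj⟩
    · rintro ⟨s, hs, hj⟩
      exact ⟨_, hs, _, hj⟩
  · intro n x hx
    obtain ⟨b, ⟨m, hm, hb⟩, hx⟩ := mem_testUnion.1 hx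
    exact mem_testUnion.2 ⟨b, ⟨m, by simp only at hm ⊢; omega, hb⟩, hx⟩
  · intro n
    refine lt_of_le_of_lt ?_ (two_inv_pow_succ_lt n)
    rw [hU]
    calc P (⋃ k, testUnion C W (n + 3 + k)) ≤ ∑' k, P (testUnion C W (n + 3 + k)) :=
          measure_iUnion_le _
      _ ≤ ∑' k, 2 * 2⁻¹ ^ (n + 3) * 2⁻¹ ^ k := by
          refine ENNReal.tsum_le_tsum fun k => (hμ _).trans_eq ?_
          rw [pow_add, mul_assoc]
      _ = 2 * 2⁻¹ ^ (n + 3) * 2 := by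
          rw [ENNReal.tsum_mul_left, ENNReal.tsum_geometric, ENNReal.one_sub_inv_two, inv_inv]
      _ = 2⁻¹ ^ (n + 1) := by
          have h2 : (2 : ℝ≥0∞) * 2⁻¹ = 1 := ENNReal.mul_inv_cancel (by simp) (by simp)
          calc (2 : ℝ≥0∞) * 2⁻¹ ^ (n + 3) * 2 = 2⁻¹ ^ (n + 1) * ((2 * 2⁻¹) * (2 * 2⁻¹)) := by ring
            _ = _ := by rw [h2]; simp
  · refine Set.mem_iInter.2 fun n => ?_
    obtain ⟨m, hm, hx⟩ := hω (n + 3)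
    obtain ⟨b, hb, hx⟩ := mem_testUnion.1 hx
    exact mem_testUnion.2 ⟨b, ⟨m, hm, hb⟩, hx⟩

theorem primrec_pow : Primrec₂ fun a b : ℕ => a ^ b :=
  Primrec₂.unpaired'.1 Nat.Primrec.pow

/-- Primitive recursive dyadic lower and upper approximations of a computable probability, in units
of `2⁻ˢ` at stage `s`. -/
theorem exists_dyadic_bounds {P : Measure (Seq × Seq)} (hP : ComputableProb2 P) :
    ∃ lo hi : ℕ → S × S → ℕ, Primrec₂ lo ∧ Primrec₂ hi ∧
      (∀ s a, (lo s a : ℝ) ≤ 2 ^ s * (P (cyl2 a)).toReal) ∧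
      (∀ s a, 2 ^ s * (P (cyl2 a)).toReal ≤ hi s a) ∧
      (∀ a, Tendsto (fun s => (lo s a : ℝ) / 2 ^ s) atTop (nhds (P (cyl2 a)).toReal)) ∧
      ∀ a, Tendsto (fun s => (hi s a : ℝ) / 2 ^ s) atTop (nhds (P (cyl2 a)).toReal) := by
  obtain ⟨hprob, p, hp, hpP⟩ := hP
  let r : (S × S) × ℕ → ℕ := fun b =>
    (p (b.1, 2 ^ b.2)).num.toNat * 2 ^ b.2 / (p (b.1, 2 ^ b.2)).den
  have hr : Computable r := by
    have hpow : Computable fun b : (S × S) × ℕ => 2 ^ b.2 :=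
      (primrec_pow.comp (Primrec.const 2) Primrec.snd).to_comp
    exact computable_round.comp (hp.comp (Computable.fst.pair hpow)) hpow
  have hrP : ∀ a k, ((r (a, k) - 1 : ℕ) : ℝ) ≤ 2 ^ k * (P (cyl2 a)).toReal ∧
      2 ^ k * (P (cyl2 a)).toReal ≤ (r (a, k) + 2 : ℕ) := by
    intro a k
    have h1 := abs_lt.1 (hpP a (2 ^ k) (by positivity))
    obtain ⟨h2, h3⟩ := round_bounds (p (a, 2 ^ k)) (2 ^ k)
    change ((r (a, k) : ℕ) : ℝ) ≤ _ at h2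
    change _ < ((r (a, k) : ℕ) : ℝ) + 1 at h3
    have hk : (0 : ℝ) < 2 ^ k := by positivity
    have hP0 : 0 ≤ (P (cyl2 a)).toReal := ENNReal.toReal_nonneg
    push_cast at h1 h2 h3
    have e : (1 : ℝ) / 2 ^ k * 2 ^ k = 1 := by field_simp
    have h4 : max ((p (a, 2 ^ k) : ℚ) : ℝ) 0 ≤ (P (cyl2 a)).toReal + 1 / 2 ^ k :=
      max_le (by linarith) (by positivity)
    have h5 := mul_le_mul_of_nonneg_right h4 hk.le
    have h6 := mul_lt_mul_of_pos_right h1.2 hk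
    have h7 : ((r (a, k) - 1 : ℕ) : ℝ) ≤ max ((r (a, k) : ℝ) - 1) 0 := by
      rcases Nat.eq_zero_or_pos (r (a, k)) with h | h
      · simp [h]
      · rw [Nat.cast_sub h]; simp
    constructor
    · refine h7.trans (max_le ?_ (by positivity))
      nlinarith
    · push_cast
      nlinarith
  obtain ⟨G, hG, hGm, hGr⟩ := exists_stage hr.partrec
  have hGr' : ∀ a k s v, G s (a, k) = some v → v = r (a, k) := fun a k s v h =>
    Part.mem_some_iff.1 ((hGr (a, k) v).2 ⟨s, h⟩)
  have hGe : ∀ a k, ∃ s, G s (a, k) = some (r (a, k)) := fun a k =>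
    (hGr (a, k) _).1 (Part.mem_some _)
  -- `K s a` is the best precision at which the approximation has been computed by stage `s`.
  let K : ℕ → S × S → ℕ := fun s a => s.findGreatest fun k => (G s (a, k)).isSome
  have hK : Primrec₂ K := by
    refine Primrec.nat_findGreatest (p := fun (q : ℕ × (S × S)) k => (G q.1 (q.2, k)).isSome)
      Primrec.fst ?_
    refine Primrec.eq.comp (Primrec.option_isSome.comp ?_) (Primrec.const true)
    exact hG.comp (Primrec.fst.comp Primrec.fst)
      ((Primrec.snd.comp Primrec.fst).pair Primrec.snd)
  let V : ℕ → S × S → Option ℕ := fun s a => G s (a, K s a)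
  have hV : Primrec₂ V := hG.comp Primrec.fst (Primrec.snd.pair hK)
  have hscale : Primrec₂ fun s a => 2 ^ (s - K s a) :=
    primrec_pow.comp (Primrec.const 2) (Primrec.nat_sub.comp Primrec.fst hK)
  let lo : ℕ → S × S → ℕ := fun s a =>
    ((V s a).map fun v => (v - 1) * 2 ^ (s - K s a)).getD 0
  let hi : ℕ → S × S → ℕ := fun s a =>
    ((V s a).map fun v => (v + 2) * 2 ^ (s - K s a)).getD (2 ^ s)
  have hlo : Primrec₂ lo := by
    refine Primrec.option_getD.comp (Primrec.option_map hV ?_) (Primrec.const 0)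
    exact Primrec.nat_mul.comp (Primrec.nat_sub.comp Primrec.snd (Primrec.const 1))
      (hscale.comp (Primrec.fst.comp Primrec.fst) (Primrec.snd.comp Primrec.fst))
  have hhi : Primrec₂ hi := by
    refine Primrec.option_getD.comp (Primrec.option_map hV ?_)
      (primrec_pow.comp (Primrec.const 2) Primrec.fst)
    exact Primrec.nat_mul.comp (Primrec.nat_add.comp Primrec.snd (Primrec.const 2))
      (hscale.comp (Primrec.fst.comp Primrec.fst) (Primrec.snd.comp Primrec.fst))
  have hKs : ∀ s a, K s a ≤ s := fun s a => Nat.findGreatest_le s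
  have hpow : ∀ s a, (2 : ℝ) ^ s = 2 ^ K s a * 2 ^ (s - K s a) := fun s a => by
    rw [← pow_add, Nat.add_sub_cancel' (hKs s a)]
  have hP1 : ∀ a, (P (cyl2 a)).toReal ≤ 1 := fun a =>
    ENNReal.toReal_le_of_le_ofReal (by simp) (by simpa using prob_le_one)
  have hlo' : ∀ s a, (lo s a : ℝ) ≤ 2 ^ s * (P (cyl2 a)).toReal := by
    intro s a
    rcases hv : V s a with _ | v
    · simp only [lo, hv, Option.map_none, Option.getD_none, Nat.cast_zero]
      positivity
    · simp only [lo, hv, Option.map_some, Option.getD_some, hGr' _ _ _ _ hv]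
      have := mul_le_mul_of_nonneg_right (hrP a (K s a)).1
        (by positivity : (0 : ℝ) ≤ 2 ^ (s - K s a))
      push_cast [hpow s a]
      linarith
  have hhi' : ∀ s a, 2 ^ s * (P (cyl2 a)).toReal ≤ hi s a := by
    intro s a
    rcases hv : V s a with _ | v
    · simp only [hi, hv, Option.map_none, Option.getD_none, Nat.cast_pow, Nat.cast_ofNat]
      exact mul_le_of_le_one_right (by positivity) (hP1 a)
    · simp only [hi, hv, Option.map_some, Option.getD_some, hGr' _ _ _ _ hv]
      have := mul_le_mul_of_nonneg_right (hrP a (K s a)).2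
        (by positivity : (0 : ℝ) ≤ 2 ^ (s - K s a))
      push_cast [hpow s a] at this ⊢
      linarith
  have hgap : ∀ a k, ∀ᶠ s in atTop, (hi s a : ℝ) - lo s a ≤ 3 * (1 / 2) ^ k * 2 ^ s := by
    intro a k
    obtain ⟨s₀, hs₀⟩ := hGe a k
    filter_upwards [eventually_ge_atTop (max s₀ k)] with s hs
    have hk : (G s (a, k)).isSome := by
      rw [hGm _ s _ _ (le_trans (le_max_left _ _) hs) hs₀]; rfl
    have hle : k ≤ s := le_trans (le_max_right _ _) hs
    have hkK : k ≤ K s a := Nat.le_findGreatest hle hk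
    have hsome : (V s a).isSome :=
      Nat.findGreatest_spec (P := fun k => (G s (a, k)).isSome = true) hle hk
    obtain ⟨v, hv⟩ := Option.isSome_iff_exists.1 hsome
    simp only [lo, hi, hv, Option.map_some, Option.getD_some]
    have h1 : ((v + 2 : ℕ) : ℝ) ≤ ((v - 1 : ℕ) : ℝ) + 3 := by
      exact_mod_cast (by omega : v + 2 ≤ v - 1 + 3)
    have h2 := mul_le_mul_of_nonneg_right h1 (by positivity : (0 : ℝ) ≤ 2 ^ (s - K s a))
    have h3 : (2 : ℝ) ^ (s - K s a) ≤ (1 / 2) ^ k * 2 ^ s := by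
      have h4 : (2 : ℝ) ^ (s - K s a) ≤ 2 ^ (s - k) :=
        pow_le_pow_right₀ (by norm_num) (by omega)
      refine h4.trans_eq ?_
      have h5 : (2 : ℝ) ^ s = 2 ^ k * 2 ^ (s - k) := by rw [← pow_add, Nat.add_sub_cancel' hle]
      rw [h5, one_div, inv_pow, inv_mul_cancel_left₀ (by positivity)]
    push_cast at h2 ⊢
    linarith
  have hz : ∀ a, Tendsto (fun s => ((hi s a : ℝ) - lo s a) / 2 ^ s) atTop (nhds 0) := by
    intro a
    rw [Metric.tendsto_atTop']
    intro ε hε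
    obtain ⟨k, hk⟩ := exists_pow_lt_of_lt_one (by positivity : 0 < ε / 3)
      (by norm_num : (1 / 2 : ℝ) < 1)
    obtain ⟨N, hN⟩ := eventually_atTop.1 (hgap a k)
    refine ⟨N, fun s hs => ?_⟩
    have h1 := hN s hs.le
    have h2 := hlo' s a
    have h3 := hhi' s a
    have hs2 : (0 : ℝ) < 2 ^ s := by positivity
    rw [Real.dist_eq, sub_zero, abs_of_nonneg (div_nonneg (by linarith) hs2.le), div_lt_iff₀ hs2]
    nlinarith
  refine ⟨lo, hi, hlo, hhi, hlo', hhi', fun a => ?_, fun a => ?_⟩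
  · refine tendsto_of_tendsto_of_tendsto_of_le_of_le
      (g := fun s => (P (cyl2 a)).toReal - ((hi s a : ℝ) - lo s a) / 2 ^ s)
      (by simpa using (tendsto_const_nhds (x := (P (cyl2 a)).toReal)).sub (hz a))
      tendsto_const_nhds (fun s => ?_) (fun s => ?_)
    · have := hhi' s a
      have hs2 : (0 : ℝ) < 2 ^ s := by positivity
      change _ - _ ≤ _
      rw [sub_le_iff_le_add, ← add_div, le_div_iff₀ hs2]
      linarith
    · have hs2 : (0 : ℝ) < 2 ^ s := by positivity
      change _ / _ ≤ _
      rw [div_le_iff₀ hs2]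
      linarith [hlo' s a]
  · refine tendsto_of_tendsto_of_tendsto_of_le_of_le
      (h := fun s => (P (cyl2 a)).toReal + ((hi s a : ℝ) - lo s a) / 2 ^ s)
      tendsto_const_nhds
      (by simpa using (tendsto_const_nhds (x := (P (cyl2 a)).toReal)).add (hz a))
      (fun s => ?_) (fun s => ?_)
    · have hs2 : (0 : ℝ) < 2 ^ s := by positivity
      change _ ≤ _ / _
      rw [le_div_iff₀ hs2]
      linarith [hhi' s a]
    · have := hlo' s a
      have hs2 : (0 : ℝ) < 2 ^ s := by positivity
      change _ / _ ≤ _ + _ / _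
      rw [← sub_le_iff_le_add, ← sub_div, div_le_iff₀ hs2]
      linarith

/-! ### Fibres of a test for P -/

theorem primrecRel_prefix : PrimrecRel fun x y : S => x <+: y :=
  (Primrec.eq.comp (Primrec.list_take.comp (Primrec.list_length.comp Primrec.fst) Primrec.snd)
    Primrec.fst).of_eq fun _ => prefix_iff_take.symm

/-- All binary strings of length `n`. -/
def strs : ℕ → List S
  | 0 => [[]]
  | n + 1 => (strs n).map (List.cons false) ++ (strs n).map (List.cons true)

theorem mem_strs {n : ℕ} {x : S} : x ∈ strs n ↔ x.length = n := by
  induction n generalizing x with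
  | zero => simp [strs]
  | succ n ih =>
    rcases x with _ | ⟨b, x⟩
    · simp [strs]
    · cases b <;> simp [strs, ih]

theorem nodup_strs (n : ℕ) : (strs n).Nodup := by
  induction n with
  | zero => simp [strs]
  | succ n ih =>
    refine List.Nodup.append (ih.map (List.cons_injective)) (ih.map (List.cons_injective)) ?_
    intro x h1 h2
    obtain ⟨_, -, rfl⟩ := List.mem_map.1 h1
    obtain ⟨_, -, h⟩ := List.mem_map.1 h2
    simp at h

theorem primrec_strs : Primrec strs := by
  have hm : ∀ b : Bool, Primrec fun p : ℕ × List S => p.2.map (List.cons b) := fun b =>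
    Primrec.list_map Primrec.snd (Primrec.list_cons.comp (Primrec.const b) Primrec.snd)
  refine (Primrec.nat_rec₁ [[]] (f := fun _ L => L.map (List.cons false) ++ L.map (List.cons true))
    (Primrec.list_append.comp (hm false) (hm true))).of_eq fun n => ?_
  induction n with
  | zero => rfl
  | succ n ih => simp only [strs, ← ih]

theorem primrec_list_sum : Primrec (List.sum : List ℕ → ℕ) :=
  (Primrec.list_foldr (h := fun _ p => p.1 + p.2) Primrec.id (Primrec.const 0)
    (Primrec.nat_add.comp (Primrec.fst.comp Primrec.snd) (Primrec.snd.comp Primrec.snd))).of_eq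
    fun _ => rfl

/-- Level `a.1` of the test enumerated by `F` contains, among its first `s` entries, a pair of
prefixes of `a.2`. -/
def Covers (F : ℕ → Option (ℕ × (S × S))) (s : ℕ) (a : ℕ × (S × S)) : Prop :=
  ∃ i < s, ∃ b : S × S, F i = some (a.1, b) ∧ b.1 <+: a.2.1 ∧ b.2 <+: a.2.2

theorem primrecRel_covers {F : ℕ → Option (ℕ × (S × S))} (hF : Primrec F) :
    PrimrecRel (Covers F) := by
  classical
  have hR : PrimrecRel fun (i : ℕ) (a : ℕ × (S × S)) =>
      ((F i).map fun c => decide (c.1 = a.1 ∧ c.2.1 <+: a.2.1 ∧ c.2.2 <+: a.2.2)).getD false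
        = true := by
    refine Primrec.eq.comp (Primrec.option_getD.comp (Primrec.option_map (hF.comp Primrec.fst) ?_)
      (Primrec.const false)) (Primrec.const true)
    refine PrimrecPred.decide (PrimrecPred.and ?_ (PrimrecPred.and ?_ ?_))
    · exact Primrec.eq.comp (Primrec.fst.comp Primrec.snd)
        (Primrec.fst.comp (Primrec.snd.comp Primrec.fst))
    · exact primrecRel_prefix.comp (Primrec.fst.comp (Primrec.snd.comp Primrec.snd))
        (Primrec.fst.comp (Primrec.snd.comp (Primrec.snd.comp Primrec.fst)))
    · exact primrecRel_prefix.comp (Primrec.snd.comp (Primrec.snd.comp Primrec.snd))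
        (Primrec.snd.comp (Primrec.snd.comp (Primrec.snd.comp Primrec.fst)))
  refine (hR.exists_mem_list.comp (Primrec.list_range.comp Primrec.fst) Primrec.snd).of_eq ?_
  rintro ⟨s, a⟩
  simp only [List.mem_range, Covers]
  refine exists_congr fun i => and_congr_right fun _ => ?_
  rcases F i with _ | ⟨m, b⟩
  · simp
  · simp only [Option.map_some, Option.getD_some, decide_eq_true_eq, Option.some.injEq,
      Prod.mk.injEq]
    constructor
    · rintro ⟨rfl, h⟩; exact ⟨b, ⟨rfl, rfl⟩, h⟩
    · rintro ⟨_, ⟨rfl, rfl⟩, h⟩; exact ⟨rfl, h⟩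

open Classical in
/-- The strings `x` of length `|y|` with `Δ(x, y)` covered by level `m` within `|y|` stages. -/
noncomputable def coverStrs (F : ℕ → Option (ℕ × (S × S))) (m : ℕ) (y : S) : Finset S :=
  (strs y.length).toFinset.filter fun x => Covers F y.length (m, (x, y))

theorem mem_coverStrs {F : ℕ → Option (ℕ × (S × S))} {m : ℕ} {x y : S} :
    x ∈ coverStrs F m y ↔ x.length = y.length ∧ Covers F y.length (m, (x, y)) := by
  simp [coverStrs, mem_strs]

theorem measure_coverStrs {P : Measure (Seq × Seq)} {F : ℕ → Option (ℕ × (S × S))} {m : ℕ}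
    {y z : S} :
    P (⋃ x ∈ coverStrs F m y, cyl2 (x, z)) = ∑ x ∈ coverStrs F m y, P (cyl2 (x, z)) := by
  refine measure_biUnion_finset ?_ fun x _ => measurableSet_cyl2 _
  intro x hx x' hx' hne
  refine Set.disjoint_left.2 fun ω h1 h2 => hne ?_
  exact eq_of_mem_cyl h1.1 h2.1
    ((mem_coverStrs.1 hx).1.trans (mem_coverStrs.1 hx').1.symm)

/-- Finite-stage witness that the fibre over `Δ(y)` of level `2 n` has conditional probability
above `2⁻ⁿ`. -/
def HeavyStage (F : ℕ → Option (ℕ × (S × S))) (lo hi : ℕ → S × S → ℕ) (s : ℕ) (a : ℕ × S) :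
    Prop :=
  hi s ([], a.2) < 2 ^ a.1 * ∑ x ∈ coverStrs F (2 * a.1) a.2, lo s (x, a.2)

theorem primrecRel_heavyStage {F : ℕ → Option (ℕ × (S × S))} (hF : Primrec F)
    {lo hi : ℕ → S × S → ℕ} (hlo : Primrec₂ lo) (hhi : Primrec₂ hi) :
    PrimrecRel (HeavyStage F lo hi) := by
  classical
  have hsum : Primrec₂ fun (s : ℕ) (a : ℕ × S) => ((strs a.2.length).map fun x =>
      if Covers F a.2.length (2 * a.1, (x, a.2)) then lo s (x, a.2) else 0).sum := by
    have hy : Primrec fun p : (ℕ × (ℕ × S)) × S => p.1.2.2 :=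
      Primrec.snd.comp (Primrec.snd.comp Primrec.fst)
    have hn : Primrec fun p : (ℕ × (ℕ × S)) × S => 2 * p.1.2.1 :=
      Primrec.nat_mul.comp (Primrec.const 2) (Primrec.fst.comp (Primrec.snd.comp Primrec.fst))
    refine primrec_list_sum.comp (Primrec.list_map
      (primrec_strs.comp (Primrec.list_length.comp (Primrec.snd.comp Primrec.snd))) ?_)
    refine Primrec.ite ?_ ?_ (Primrec.const 0)
    · exact (primrecRel_covers hF).comp (Primrec.list_length.comp hy)
        (hn.pair (Primrec.snd.pair hy))
    · exact hlo.comp (Primrec.fst.comp Primrec.fst) (Primrec.snd.pair hy)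
  refine (Primrec.nat_lt.comp (hhi.comp Primrec.fst ((Primrec.const []).pair
    (Primrec.snd.comp Primrec.snd))) (Primrec.nat_mul.comp (primrec_pow.comp (Primrec.const 2)
      (Primrec.fst.comp Primrec.snd)) hsum)).of_eq ?_
  rintro ⟨s, n, y⟩
  simp only [HeavyStage, coverStrs, Finset.sum_filter]
  rw [List.sum_toFinset _ (nodup_strs _)]

theorem margY_cyl (P : Measure (Seq × Seq)) (y : S) : margY P (cyl y) = P (cyl2 ([], y)) := by
  rw [margY, Measure.map_apply measurable_snd (measurableSet_cyl y)]
  congr 1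
  ext ω
  simp [cyl2]

theorem condP_eq (P : Measure (Seq × Seq)) (x y : S) :
    condP P x y = (P (cyl2 (x, y))).toReal / (P (cyl2 ([], y))).toReal := by
  simp [condP, cyl2]

theorem testUnion_antitone {α β : Type} {C : β → Set α} {U : Set (ℕ × β)}
    (h : ∀ n, testUnion C U (n + 1) ⊆ testUnion C U n) : Antitone (testUnion C U) :=
  antitone_nat_of_succ_le h

/-- If `y∞` is random for the marginal, the fibre over `y∞` of a test for `P` is a test for
`P(·|y∞)` relative to `y∞`, up to reindexing: the strings `y` over which level `2 n` has
conditional probability above `2⁻ⁿ` form an r.e. set of marginal measure at most `2⁻ⁿ`, so a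
random `y∞` has only finitely many `n` with a prefix in it. -/
theorem random2_of_relMLRandom {P : Measure (Seq × Seq)} (hP : ComputableProb2 P)
    {yinf : Seq} (hy : Random1 (margY P) yinf) {Q : Measure Seq} [IsProbabilityMeasure Q]
    (hQ : ∀ x : S, Tendsto (fun m => condP P x (seqTake yinf m)) atTop
      (nhds ((Q (cyl x)).toReal)))
    {xinf : Seq} (hx : RelMLRandom Q yinf xinf) : Random2 P (xinf, yinf) := by
  classical
  rintro U ⟨hUre, hUnest, hUμ⟩ hmem
  have hprob : IsProbabilityMeasure P := hP.1
  obtain ⟨lo, hi, hlo, hhi, hloP, hhiP, hlot, hhit⟩ := exists_dyadic_bounds hP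
  obtain ⟨F, hF, hUF⟩ := hUre.exists_primrec
  have hcov : ∀ {m : ℕ} {y : S} {ω : Seq × Seq}, ω ∈ ⋃ x ∈ coverStrs F m y, cyl2 (x, y) →
      ω ∈ testUnion cyl2 U m ∩ cyl2 ([], y) := by
    intro m y ω hω
    simp only [Set.mem_iUnion] at hω
    obtain ⟨x, hxc, hω⟩ := hω
    obtain ⟨-, i, -, b, hb, h1, h2⟩ := mem_coverStrs.1 hxc
    refine ⟨mem_testUnion.2 ⟨b, ?_, cyl_subset h1 hω.1, cyl_subset h2 hω.2⟩, by simp, hω.2⟩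
    rw [hUF]; exact ⟨i, hb⟩
  let V : Set (ℕ × S) := {a | ∃ s, HeavyStage F lo hi s a}
  have hV : RESet V := reSet_of_primrec (primrecRel_heavyStage hF hlo hhi)
  have hVsound : ∀ n y, (n, y) ∈ V →
      margY P (cyl y) ≤ 2 ^ n * P (testUnion cyl2 U (2 * n) ∩ cyl2 ([], y)) := by
    rintro n y ⟨s, hs⟩
    refine le_trans ?_ (mul_le_mul_right (measure_mono fun ω hω => hcov hω) _)
    rw [measure_coverStrs, margY_cyl]
    have hfin : ∀ a, P a ≠ ⊤ := fun a => measure_ne_top P a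
    rw [← ENNReal.toReal_le_toReal (hfin _)
      (ENNReal.mul_ne_top (by simp) (ENNReal.sum_ne_top.2 fun _ _ => hfin _)), ENNReal.toReal_mul,
      ENNReal.toReal_sum fun _ _ => hfin _]
    simp only [ENNReal.toReal_pow, ENNReal.toReal_ofNat]
    have h1 : (hi s ([], y) : ℝ) < 2 ^ n * ∑ x ∈ coverStrs F (2 * n) y, (lo s (x, y) : ℝ) := by
      have h0 : hi s ([], y) < 2 ^ n * ∑ x ∈ coverStrs F (2 * n) y, lo s (x, y) := hs
      exact_mod_cast h0
    have h2 : ∑ x ∈ coverStrs F (2 * n) y, (lo s (x, y) : ℝ) ≤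
        2 ^ s * ∑ x ∈ coverStrs F (2 * n) y, (P (cyl2 (x, y))).toReal := by
      rw [Finset.mul_sum]
      exact Finset.sum_le_sum fun x _ => hloP s (x, y)
    have h3 := hhiP s ([], y)
    have hs2 : (0 : ℝ) < 2 ^ s := by positivity
    have h4 := mul_le_mul_of_nonneg_left h2 (by positivity : (0 : ℝ) ≤ 2 ^ n)
    refine le_of_mul_le_mul_left ?_ hs2
    linarith
  have hVμ : ∀ n, margY P (testUnion cyl V n) ≤ 2 * 2⁻¹ ^ n := by
    intro n
    let M : Set S := minimals {y | (n, y) ∈ V}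
    have hsub : testUnion cyl V n ⊆ ⋃ y : M, cyl y := by
      intro ω hω
      obtain ⟨y, hyV, hω⟩ := mem_testUnion.1 hω
      obtain ⟨y', hy', hω'⟩ := exists_minimal (W := {y | (n, y) ∈ V}) hyV hω
      exact Set.mem_iUnion.2 ⟨⟨y', hy'⟩, hω'⟩
    have hTm : MeasurableSet (testUnion cyl2 U (2 * n)) :=
      MeasurableSet.biUnion (Set.to_countable _) fun a _ => measurableSet_cyl2 a
    calc margY P (testUnion cyl V n) ≤ margY P (⋃ y : M, cyl y) := measure_mono hsub
      _ ≤ ∑' y : M, margY P (cyl y) := measure_iUnion_le _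
      _ ≤ ∑' y : M, 2 ^ n * P (testUnion cyl2 U (2 * n) ∩ cyl2 ([], (y : S))) :=
          ENNReal.tsum_le_tsum fun y => hVsound n y y.2.1
      _ = 2 ^ n * P (⋃ y : M, testUnion cyl2 U (2 * n) ∩ cyl2 ([], (y : S))) := by
          rw [ENNReal.tsum_mul_left, measure_iUnion]
          · intro y z hne
            refine Set.disjoint_left.2 fun ω h1 h2 => hne ?_
            exact Subtype.ext (eq_of_mem_minimals y.2 z.2 h1.2.2 h2.2.2)
          · exact fun y => hTm.inter (measurableSet_cyl2 _)
      _ ≤ 2 ^ n * 2⁻¹ ^ (2 * n) := by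
          gcongr
          refine le_trans (measure_mono ?_) (hUμ (2 * n)).le
          exact Set.iUnion_subset fun y => Set.inter_subset_left
      _ = 2⁻¹ ^ n := by
          rw [two_mul, pow_add, ← mul_assoc, ← mul_pow, ENNReal.mul_inv_cancel (by simp) (by simp),
            one_pow, one_mul]
      _ ≤ 2 * 2⁻¹ ^ n := le_mul_of_one_le_left (by simp) (by norm_num)
  obtain ⟨N, hN⟩ : ∃ N, ∀ n ≥ N, yinf ∉ testUnion cyl V n := by
    by_contra! hcon
    exact not_mlRandom_of_frequently hV hVμ hcon hy
  -- Fibres of the finite stages of level `2 n`.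
  have hfib : ∀ n ≥ N, ∀ y, yinf ∈ cyl y →
      2 ^ n * ∑ x ∈ coverStrs F (2 * n) y, (P (cyl2 (x, y))).toReal ≤
        (P (cyl2 ([], y))).toReal := by
    intro n hn y hyc
    have hnot : ∀ s, ¬ HeavyStage F lo hi s (n, y) := fun s hs =>
      hN n hn (mem_testUnion.2 ⟨y, ⟨s, hs⟩, hyc⟩)
    refine le_of_tendsto_of_tendsto (b := atTop)
      (f := fun s => (2 : ℝ) ^ n * ∑ x ∈ coverStrs F (2 * n) y, (lo s (x, y) : ℝ) / 2 ^ s)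
      (g := fun s => (hi s ([], y) : ℝ) / 2 ^ s) ?_ (hhit _) (Eventually.of_forall fun s => ?_)
    · exact (tendsto_finsetSum _ fun x _ => hlot _).const_mul _
    · have h1 : 2 ^ n * ∑ x ∈ coverStrs F (2 * n) y, lo s (x, y) ≤ hi s ([], y) := not_lt.1 (hnot s)
      have h2 : (2 : ℝ) ^ n * ∑ x ∈ coverStrs F (2 * n) y, (lo s (x, y) : ℝ) ≤ hi s ([], y) := by
        exact_mod_cast h1
      change _ * _ ≤ _ / _
      rw [← Finset.sum_div, ← mul_div_assoc]
      gcongr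
  let O : ℕ → ℕ → Set Seq := fun m L => ⋃ x ∈ coverStrs F m (seqTake yinf L), cyl x
  have hmemO : ∀ m L ω, ω ∈ O m L ↔ Covers F L (m, (seqTake ω L, seqTake yinf L)) := by
    intro m L ω
    simp only [O, Set.mem_iUnion]
    constructor
    · rintro ⟨x, hxc, hω⟩
      obtain ⟨hl, hc⟩ := mem_coverStrs.1 hxc
      rw [length_seqTake] at hl hc
      rwa [← mem_cyl_iff_seqTake.1 hω, hl] at hc
    · intro hc
      exact ⟨seqTake ω L, mem_coverStrs.2 (by simpa using hc), mem_cyl_seqTake ω L⟩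
  have hOmono : ∀ m, Monotone (O m) := by
    intro m L L' hL ω hω
    rw [hmemO] at hω ⊢
    obtain ⟨i, hi, b, hb, h1, h2⟩ := hω
    exact ⟨i, hi.trans_le hL, b, hb, h1.trans (seqTake_prefix _ hL), h2.trans (seqTake_prefix _ hL)⟩
  have hOunion : ∀ m ω, (ω, yinf) ∈ testUnion cyl2 U m → ∃ L, ω ∈ O m L := by
    intro m ω hω
    obtain ⟨b, hb, h1, h2⟩ := mem_testUnion.1 hω
    rw [hUF] at hb
    obtain ⟨i, hi⟩ := hb
    refine ⟨max (i + 1) (max b.1.length b.2.length), (hmemO _ _ _).2 ⟨i, by omega, b, hi, ?_, ?_⟩⟩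
    · exact prefix_seqTake_iff.2 ⟨h1, by simp⟩
    · exact prefix_seqTake_iff.2 ⟨h2, by simp⟩
  have hOQ : ∀ n ≥ N, ∀ L, Q (O (2 * n) L) ≤ 2⁻¹ ^ n := by
    intro n hn L
    have hsum : ∑ x ∈ coverStrs F (2 * n) (seqTake yinf L), (Q (cyl x)).toReal ≤ (2⁻¹ : ℝ) ^ n := by
      refine le_of_tendsto (tendsto_finsetSum _ fun x _ => hQ x) ?_
      filter_upwards [eventually_ge_atTop L] with m hm
      simp only [condP_eq, ← Finset.sum_div]
      refine div_le_of_le_mul₀ ENNReal.toReal_nonneg (by positivity) ?_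
      have h1 := hfib n hn (seqTake yinf m) (mem_cyl_seqTake _ _)
      have h2 : ∑ x ∈ coverStrs F (2 * n) (seqTake yinf L), (P (cyl2 (x, seqTake yinf m))).toReal ≤
          ∑ x ∈ coverStrs F (2 * n) (seqTake yinf m), (P (cyl2 (x, seqTake yinf m))).toReal := by
        rw [← ENNReal.toReal_sum fun _ _ => measure_ne_top P _,
          ← ENNReal.toReal_sum fun _ _ => measure_ne_top P _, ← measure_coverStrs,
          ← measure_coverStrs]
        refine ENNReal.toReal_mono (measure_ne_top P _) (measure_mono fun ω hω => ?_)
        have h3 : ω.1 ∈ O (2 * n) L ∧ ω.2 ∈ cyl (seqTake yinf m) := by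
          simp only [O, Set.mem_iUnion] at hω ⊢
          obtain ⟨x, hxc, hω⟩ := hω
          exact ⟨⟨x, hxc, hω.1⟩, hω.2⟩
        have h4 := hOmono _ hm h3.1
        simp only [O, Set.mem_iUnion] at h4 ⊢
        obtain ⟨x, hxc, hω'⟩ := h4
        exact ⟨x, hxc, hω', h3.2⟩
      rw [inv_pow, ← div_eq_inv_mul, le_div_iff₀ (by positivity), mul_comm]
      exact (mul_le_mul_of_nonneg_left h2 (by positivity)).trans h1
    calc Q (O (2 * n) L) ≤ ∑ x ∈ coverStrs F (2 * n) (seqTake yinf L), Q (cyl x) :=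
          measure_biUnion_finset_le _ _
      _ ≤ 2⁻¹ ^ n := by
          rw [← ENNReal.toReal_le_toReal (ENNReal.sum_ne_top.2 fun _ _ => measure_ne_top Q _)
            (two_inv_pow_ne_top n), ENNReal.toReal_sum fun _ _ => measure_ne_top Q _]
          simpa using hsum
  let T : ℕ → Set S := fun n => {x | ∃ z, (2 * (n + N + 1), (x, z)) ∈ U ∧ yinf ∈ cyl z}
  have hT : ∀ n ω, ω ∈ (⋃ x ∈ T n, cyl x) ↔ (ω, yinf) ∈ testUnion cyl2 U (2 * (n + N + 1)) := by
    intro n ω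
    simp only [Set.mem_iUnion, mem_testUnion]
    constructor
    · rintro ⟨x, ⟨z, hz, hyz⟩, hω⟩; exact ⟨(x, z), hz, hω, hyz⟩
    · rintro ⟨⟨x, z⟩, hz, hω, hyz⟩; exact ⟨x, ⟨z, hz, hyz⟩, hω⟩
  refine hx T ⟨?_, ?_, ?_⟩ ?_
  · let G : (ℕ × ℕ) × S → Option S := fun a => (F a.1.1).bind fun c =>
      if c.1 = 2 * (a.1.2 + N + 1) ∧ c.2.2 <+: a.2 then some c.2.1 else none
    have hG : Primrec G := by
      refine Primrec.option_bind (hF.comp (Primrec.fst.comp Primrec.fst)) ?_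
      refine Primrec.ite (PrimrecPred.and (Primrec.eq.comp (Primrec.fst.comp Primrec.snd) ?_)
        (primrecRel_prefix.comp (Primrec.snd.comp (Primrec.snd.comp Primrec.snd))
          (Primrec.snd.comp Primrec.fst)))
        (Primrec.option_some.comp (Primrec.fst.comp (Primrec.snd.comp Primrec.snd)))
        (Primrec.const none)
      exact Primrec.nat_mul.comp (Primrec.const 2) (Primrec.succ.comp (Primrec.nat_add.comp
        (Primrec.snd.comp (Primrec.fst.comp Primrec.fst)) (Primrec.const N)))
    have hGmem : ∀ i n y x, x ∈ (G ((i, n), y) : Part S) ↔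
        ∃ z, F i = some (2 * (n + N + 1), (x, z)) ∧ z <+: y := by
      intro i n y x
      rw [Part.mem_ofOption, Option.mem_def]
      simp only [G, Option.bind_eq_some_iff]
      constructor
      · rintro ⟨⟨m, x', z⟩, hF', h⟩
        split_ifs at h with h'
        obtain ⟨rfl, h2⟩ := h'
        cases h
        exact ⟨z, hF', h2⟩
      · rintro ⟨z, hF', hz⟩
        exact ⟨_, hF', by simp [hz]⟩
    refine ⟨fun a => (G a : Part S), hG.to_comp.ofOption, ?_, ?_⟩
    · intro i n y z x hxy hyz
      obtain ⟨w, hw, hwy⟩ := (hGmem _ _ _ _).1 hxy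
      exact (hGmem _ _ _ _).2 ⟨w, hw, hwy.trans hyz⟩
    · intro n
      ext x
      simp only [T, hUF, Set.mem_ofPred_eq, hGmem]
      constructor
      · rintro ⟨z, ⟨i, hi⟩, hz⟩
        exact ⟨i, z.length, z, hi, prefix_seqTake_iff.2 ⟨hz, le_rfl⟩⟩
      · rintro ⟨i, m, z, hi, hz⟩
        exact ⟨z, ⟨i, hi⟩, (prefix_seqTake_iff.1 hz).1⟩
  · intro n ω hω
    rw [hT] at hω ⊢
    exact testUnion_antitone hUnest (by omega) hω
  · intro n
    have h1 : (⋃ x ∈ T n, cyl x) ⊆ ⋃ L, O (2 * (n + N + 1)) L := fun ω hω =>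
      Set.mem_iUnion.2 (hOunion _ _ ((hT _ _).1 hω))
    calc Q (⋃ x ∈ T n, cyl x) ≤ Q (⋃ L, O (2 * (n + N + 1)) L) := measure_mono h1
      _ = ⨆ L, Q (O (2 * (n + N + 1)) L) := (hOmono _).measure_iUnion
      _ ≤ 2⁻¹ ^ (n + N + 1) := iSup_le (hOQ _ (by omega))
      _ ≤ 2⁻¹ ^ (n + 1) := two_inv_pow_anti (by omega)
      _ < 2⁻¹ ^ n := two_inv_pow_succ_lt n
  · exact Set.mem_iInter.2 fun n => (hT _ _).2 (Set.mem_iInter.1 hmem _)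

/-! ### Admission of boxes -/

/-- The test enumeration with stages `G` puts a prefix of `w` into level `n` within `|w|` stages,
using at most `|w|` bits of `y` and an index at most `|w|`; here `a = (n, (w, y))`. -/
def Hit (G : ℕ → (ℕ × ℕ) × S → Option S) (a : ℕ × (S × S)) : Prop :=
  ∃ j < a.2.1.length + 1, ∃ i < a.2.1.length + 1, ∃ x : S,
    G a.2.1.length ((i, a.1), a.2.2.take j) = some x ∧ x <+: a.2.1

/-- `w` is hit, but not once its last bit is removed. Over a fixed oracle the cylinders of these
strings partition the level. -/
def Piece (G : ℕ → (ℕ × ℕ) × S → Option S) (a : ℕ × (S × S)) : Prop :=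
  Hit G a ∧ (a.2.1.length = 0 ∨ ¬ Hit G (a.1, (a.2.1.take (a.2.1.length - 1), a.2.2)))

theorem primrecPred_hit {G : ℕ → (ℕ × ℕ) × S → Option S} (hG : Primrec₂ G) :
    PrimrecPred (Hit G) := by
  classical
  have hR : PrimrecRel fun (i : ℕ) (p : ℕ × (ℕ × (S × S))) =>
      ((G p.2.2.1.length ((i, p.2.1), p.2.2.2.take p.1)).map fun x =>
        decide (x <+: p.2.2.1)).getD false = true := by
    have hp1 : Primrec fun q : ℕ × (ℕ × (ℕ × (S × S))) => q.2.1 :=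
      Primrec.fst.comp Primrec.snd
    have hn : Primrec fun q : ℕ × (ℕ × (ℕ × (S × S))) => q.2.2.1 :=
      Primrec.fst.comp (Primrec.snd.comp Primrec.snd)
    have hw : Primrec fun q : ℕ × (ℕ × (ℕ × (S × S))) => q.2.2.2.1 :=
      Primrec.fst.comp (Primrec.snd.comp (Primrec.snd.comp Primrec.snd))
    have hy : Primrec fun q : ℕ × (ℕ × (ℕ × (S × S))) => q.2.2.2.2 :=
      Primrec.snd.comp (Primrec.snd.comp (Primrec.snd.comp Primrec.snd))
    refine Primrec.eq.comp (Primrec.option_getD.comp (Primrec.option_map (hG.comp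
      (Primrec.list_length.comp hw) ((Primrec.fst.pair hn).pair (Primrec.list_take.comp hp1 hy)))
      ?_) (Primrec.const false)) (Primrec.const true)
    exact PrimrecPred.decide (primrecRel_prefix.comp Primrec.snd (hw.comp Primrec.fst))
  have hlen : Primrec fun a : ℕ × (S × S) => List.range (a.2.1.length + 1) :=
    Primrec.list_range.comp (Primrec.succ.comp (Primrec.list_length.comp
      (Primrec.fst.comp Primrec.snd)))
  have hR2 : PrimrecRel fun (j : ℕ) (a : ℕ × (S × S)) =>
      ∃ i ∈ List.range (a.2.1.length + 1), ((G a.2.1.length ((i, a.1), a.2.2.take j)).map fun x =>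
        decide (x <+: a.2.1)).getD false = true :=
    hR.exists_mem_list.comp (hlen.comp Primrec.snd) Primrec.id
  refine (hR2.exists_mem_list.comp hlen Primrec.id).of_eq fun a => ?_
  simp only [List.mem_range, Hit, id]
  refine exists_congr fun j => and_congr_right fun _ => exists_congr fun i =>
    and_congr_right fun _ => ?_
  rcases G a.2.1.length ((i, a.1), a.2.2.take j) with _ | x <;> simp

theorem primrecPred_piece {G : ℕ → (ℕ × ℕ) × S → Option S} (hG : Primrec₂ G) :
    PrimrecPred (Piece G) := by
  have hw : Primrec fun a : ℕ × (S × S) => a.2.1 := Primrec.fst.comp Primrec.snd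
  refine PrimrecPred.and (primrecPred_hit hG) (PrimrecPred.or ?_ (PrimrecPred.not ?_))
  · exact Primrec.eq.comp (Primrec.list_length.comp hw) (Primrec.const 0)
  · exact (primrecPred_hit hG).comp (Primrec.fst.pair ((Primrec.list_take.comp (Primrec.nat_sub.comp
      (Primrec.list_length.comp hw) (Primrec.const 1)) hw).pair (Primrec.snd.comp Primrec.snd)))

theorem Hit.congr {G : ℕ → (ℕ × ℕ) × S → Option S} {n : ℕ} {w y y' : S}
    (h : y.take w.length = y'.take w.length) (ha : Hit G (n, (w, y))) : Hit G (n, (w, y')) := by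
  obtain ⟨j, hj, i, hi, x, hx, hxw⟩ := ha
  refine ⟨j, hj, i, hi, x, ?_, hxw⟩
  have h' : y.take j = y'.take j := by
    have h2 := congrArg (List.take j) h
    rwa [List.take_take, List.take_take, min_eq_left (Nat.lt_succ_iff.1 hj)] at h2
  rw [← hx]
  simp only [h']

theorem hit_congr {G : ℕ → (ℕ × ℕ) × S → Option S} {n : ℕ} {w y y' : S}
    (h : y.take w.length = y'.take w.length) : Hit G (n, (w, y)) ↔ Hit G (n, (w, y')) :=
  ⟨Hit.congr h, Hit.congr h.symm⟩

theorem piece_congr {G : ℕ → (ℕ × ℕ) × S → Option S} {n : ℕ} {w y y' : S}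
    (h : y.take w.length = y'.take w.length) : Piece G (n, (w, y)) ↔ Piece G (n, (w, y')) := by
  refine and_congr (hit_congr h) (or_congr Iff.rfl (not_congr (hit_congr ?_)))
  have h2 := congrArg (List.take (w.length - 1)) h
  simpa [List.take_take] using h2

theorem Hit.mono {G : ℕ → (ℕ × ℕ) × S → Option S}
    (hG : ∀ s t a b, s ≤ t → G s a = some b → G t a = some b) {n : ℕ} {w w' y : S}
    (h : w <+: w') (ha : Hit G (n, (w, y))) : Hit G (n, (w', y)) := by
  obtain ⟨j, hj, i, hi, x, hx, hxw⟩ := ha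
  have hl := h.length_le
  simp only at hj hi hx hxw
  exact ⟨j, by simp only; omega, i, by simp only; omega, x, hG _ _ _ _ hl hx, hxw.trans h⟩

theorem piece_eq_of_prefix {G : ℕ → (ℕ × ℕ) × S → Option S}
    (hG : ∀ s t a b, s ≤ t → G s a = some b → G t a = some b) {n : ℕ} {w w' y : S}
    (h : w <+: w') (hw : Piece G (n, (w, y))) (hw' : Piece G (n, (w', y))) : w = w' := by
  by_contra hne
  have hl : w.length < w'.length :=
    lt_of_le_of_ne h.length_le fun hl => hne (h.eq_of_length hl)
  rcases hw'.2 with h0 | h0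
  · simp only at h0; omega
  · refine h0 (hw.1.mono hG ?_)
    simp only
    rw [prefix_iff_take, List.take_take, min_eq_left (by omega)]
    exact prefix_iff_take.1 h

open Classical in
/-- Stage `s` of the claimed mass, in units of `2⁻⁽ⁿ⁺ᵉ⁺³⁾`, of the string `w` with code `e` at
level `n`, given the part `y` of the oracle; here `p = ((n, y), e)`. Codes of no piece claim `0`. The
value is undefined if `y` is too short or if the stage `GA s` is not yet defined. -/
noncomputable def claim (GB : ℕ → (ℕ × ℕ) × S → Option S) (GA : ℕ → (S × S) × ℕ → Option ℕ)
    (s : ℕ) (p : (ℕ × S) × ℕ) : Option ℕ :=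
  ((Encodable.decode₂ S p.2).map fun w =>
    if w.length ≤ p.1.2.length then
      if Piece GB (p.1.1, (w, p.1.2)) then GA s ((w, p.1.2), p.1.1 + p.2 + 3) else some 0
    else none).getD (some 0)

theorem primrec_claim {GB : ℕ → (ℕ × ℕ) × S → Option S} {GA : ℕ → (S × S) × ℕ → Option ℕ}
    (hGB : Primrec₂ GB) (hGA : Primrec₂ GA) : Primrec₂ (claim GB GA) := by
  classical
  have hw : Primrec fun q : (ℕ × ((ℕ × S) × ℕ)) × S => q.2 := Primrec.snd
  have hn : Primrec fun q : (ℕ × ((ℕ × S) × ℕ)) × S => q.1.2.1.1 :=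
    Primrec.fst.comp (Primrec.fst.comp (Primrec.snd.comp Primrec.fst))
  have hy : Primrec fun q : (ℕ × ((ℕ × S) × ℕ)) × S => q.1.2.1.2 :=
    Primrec.snd.comp (Primrec.fst.comp (Primrec.snd.comp Primrec.fst))
  have he : Primrec fun q : (ℕ × ((ℕ × S) × ℕ)) × S => q.1.2.2 :=
    Primrec.snd.comp (Primrec.snd.comp Primrec.fst)
  refine Primrec.option_getD.comp (Primrec.option_map (Primrec.decode₂.comp
    (Primrec.snd.comp Primrec.snd)) ?_) (Primrec.const (some 0))
  refine Primrec.ite ?_ (Primrec.ite ?_ ?_ (Primrec.const (some 0))) (Primrec.const none)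
  · exact Primrec.nat_le.comp (Primrec.list_length.comp hw) (Primrec.list_length.comp hy)
  · exact (primrecPred_piece hGB).comp (hn.pair (hw.pair hy))
  · exact hGA.comp (Primrec.fst.comp Primrec.fst) ((hw.pair hy).pair (Primrec.nat_add.comp
      (Primrec.nat_add.comp hn he) (Primrec.const 3)))

theorem claim_of_decode_none {GB : ℕ → (ℕ × ℕ) × S → Option S} {GA : ℕ → (S × S) × ℕ → Option ℕ}
    {s n e : ℕ} {y : S} (h : Encodable.decode₂ S e = none) :
    claim GB GA s ((n, y), e) = some 0 := by
  simp [claim, h]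

theorem claim_encode {GB : ℕ → (ℕ × ℕ) × S → Option S} {GA : ℕ → (S × S) × ℕ → Option ℕ}
    {s n : ℕ} {w y : S} (h : w.length ≤ y.length) (hw : Piece GB (n, (w, y))) :
    claim GB GA s ((n, y), Encodable.encode w) = GA s ((w, y), n + Encodable.encode w + 3) := by
  simp [claim, h, hw]

theorem claim_encode_not {GB : ℕ → (ℕ × ℕ) × S → Option S} {GA : ℕ → (S × S) × ℕ → Option ℕ}
    {s n : ℕ} {w y : S} (h : w.length ≤ y.length) (hw : ¬ Piece GB (n, (w, y))) :
    claim GB GA s ((n, y), Encodable.encode w) = some 0 := by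
  simp [claim, h, hw]

/-- Claims, once defined, do not change when more of the oracle is read. -/
theorem claim_unique_of_prefix {GB : ℕ → (ℕ × ℕ) × S → Option S} {A : (S × S) × ℕ →. ℕ}
    {GA : ℕ → (S × S) × ℕ → Option ℕ} (hGA : ∀ a b, b ∈ A a ↔ ∃ s, GA s a = some b)
    (hA : ∀ x y z k c, c ∈ A ((x, y), k) → y <+: z → c ∈ A ((x, z), k))
    {s s' n e c c' : ℕ} {y y' : S} (hyy : y <+: y')
    (h : claim GB GA s ((n, y), e) = some c) (h' : claim GB GA s' ((n, y'), e) = some c') :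
    c = c' := by
  rcases hd : Encodable.decode₂ S e with _ | w
  · rw [claim_of_decode_none hd] at h h'
    exact Option.some.inj (h.symm.trans h')
  · have hl : w.length ≤ y.length := by
      by_contra hl
      simp [claim, hd, hl] at h
    have he := Encodable.decode₂_eq_some.1 hd
    subst he
    -- Being a piece depends only on the first `|w|` bits of the oracle.
    have hcong : Piece GB (n, (w, y)) ↔ Piece GB (n, (w, y')) := by
      refine piece_congr ?_
      rw [← prefix_iff_take.1 hyy, List.take_take, min_eq_left hl]
    have hl' := hl.trans hyy.length_le
    by_cases hp : Piece GB (n, (w, y))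
    · rw [claim_encode hl hp] at h
      rw [claim_encode hl' (hcong.1 hp)] at h'
      exact Part.mem_unique (hA _ _ _ _ _ ((hGA _ _).2 ⟨_, h⟩) hyy) ((hGA _ _).2 ⟨_, h'⟩)
    · rw [claim_encode_not hl hp] at h
      rw [claim_encode_not hl' (fun h => hp (hcong.2 h))] at h'
      exact Option.some.inj (h.symm.trans h')

theorem claim_unique {GB : ℕ → (ℕ × ℕ) × S → Option S} {A : (S × S) × ℕ →. ℕ}
    {GA : ℕ → (S × S) × ℕ → Option ℕ} (hGA : ∀ a b, b ∈ A a ↔ ∃ s, GA s a = some b)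
    (hA : ∀ x y z k c, c ∈ A ((x, y), k) → y <+: z → c ∈ A ((x, z), k))
    {s s' n e c c' : ℕ} {y y' : S} {η : Seq} (hy : η ∈ cyl y) (hy' : η ∈ cyl y')
    (h : claim GB GA s ((n, y), e) = some c) (h' : claim GB GA s' ((n, y'), e) = some c') :
    c = c' := by
  rcases le_total y.length y'.length with hl | hl
  · exact claim_unique_of_prefix hGA hA (prefix_of_mem_cyl hy hy' hl) h h'
  · exact (claim_unique_of_prefix hGA hA (prefix_of_mem_cyl hy' hy hl) h' h).symm

/-- Stage `s` of the admission of `Δ(w, y)`, `a = (n, (w, y))`, into level `n` of the test for `P`: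
all masses up to the code of `w` are claimed and add up to at most `2 * 2⁻ⁿ`, and
`P(w|y)` is below the mass claimed for `w`. -/
def Admitted (GB : ℕ → (ℕ × ℕ) × S → Option S) (GA : ℕ → (S × S) × ℕ → Option ℕ)
    (lo hi : ℕ → S × S → ℕ) (s : ℕ) (a : ℕ × (S × S)) : Prop :=
  (∀ e ∈ List.range (Encodable.encode a.2.1 + 1),
    (claim GB GA s ((a.1, a.2.2), e)).isSome = true) ∧
  ((List.range (Encodable.encode a.2.1 + 1)).map fun e =>
    (claim GB GA s ((a.1, a.2.2), e)).getD 0 * 2 ^ (Encodable.encode a.2.1 - e)).sum ≤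
      16 * 2 ^ Encodable.encode a.2.1 ∧
  hi s a.2 * 2 ^ (a.1 + Encodable.encode a.2.1 + 3) <
    (claim GB GA s ((a.1, a.2.2), Encodable.encode a.2.1)).getD 0 * lo s ([], a.2.2)

theorem primrecRel_admitted {GB : ℕ → (ℕ × ℕ) × S → Option S} {GA : ℕ → (S × S) × ℕ → Option ℕ}
    (hGB : Primrec₂ GB) (hGA : Primrec₂ GA) {lo hi : ℕ → S × S → ℕ} (hlo : Primrec₂ lo)
    (hhi : Primrec₂ hi) : PrimrecRel (Admitted GB GA lo hi) := by
  have hc := primrec_claim hGB hGA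
  have hn : Primrec fun q : ℕ × (ℕ × (S × S)) => q.2.1 := Primrec.fst.comp Primrec.snd
  have hw : Primrec fun q : ℕ × (ℕ × (S × S)) => q.2.2.1 :=
    Primrec.fst.comp (Primrec.snd.comp Primrec.snd)
  have hy : Primrec fun q : ℕ × (ℕ × (S × S)) => q.2.2.2 :=
    Primrec.snd.comp (Primrec.snd.comp Primrec.snd)
  have he : Primrec fun q : ℕ × (ℕ × (S × S)) => Encodable.encode q.2.2.1 :=
    Primrec.encode.comp hw
  have hrange := Primrec.list_range.comp (Primrec.succ.comp he)
  refine PrimrecPred.and ?_ (PrimrecPred.and ?_ ?_)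
  · have hR : PrimrecRel fun (e : ℕ) (q : ℕ × (ℕ × (S × S))) =>
        (claim GB GA q.1 ((q.2.1, q.2.2.2), e)).isSome = true :=
      Primrec.eq.comp (Primrec.option_isSome.comp (hc.comp (Primrec.fst.comp Primrec.snd)
        (((hn.comp Primrec.snd).pair (hy.comp Primrec.snd)).pair Primrec.fst))) (Primrec.const true)
    exact hR.forall_mem_list.comp hrange Primrec.id
  · refine Primrec.nat_le.comp (primrec_list_sum.comp (Primrec.list_map hrange ?_))
      (Primrec.nat_mul.comp (Primrec.const 16) (primrec_pow.comp (Primrec.const 2) he))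
    refine Primrec.nat_mul.comp (Primrec.option_getD.comp (hc.comp (Primrec.fst.comp Primrec.fst)
      (((hn.comp Primrec.fst).pair (hy.comp Primrec.fst)).pair Primrec.snd)) (Primrec.const 0)) ?_
    exact primrec_pow.comp (Primrec.const 2) (Primrec.nat_sub.comp (he.comp Primrec.fst) Primrec.snd)
  · refine Primrec.nat_lt.comp (Primrec.nat_mul.comp (hhi.comp Primrec.fst (hw.pair hy))
      (primrec_pow.comp (Primrec.const 2) (Primrec.nat_add.comp (Primrec.nat_add.comp hn he)
        (Primrec.const 3)))) ?_
    exact Primrec.nat_mul.comp (Primrec.option_getD.comp (hc.comp Primrec.fst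
      ((hn.pair hy).pair he)) (Primrec.const 0)) (hlo.comp Primrec.fst ((Primrec.const []).pair hy))

/-! ### Measure of the admitted boxes -/

/-- A union of boxes `Δ(w, y)` of `P`-mass at most `c (w, y) * P_Y(y)` has `P`-mass at most `δ`
if, above every `η`, the weights `c` of finitely many boxes with distinct `w` add up to at most
`δ`. Keeping only the shortest `y` for each `w` covers the union with distinct `w` above each
`η`. -/
theorem measure_biUnion_le_of_fibre {P : Measure (Seq × Seq)} [IsProbabilityMeasure P]
    {W : Set (S × S)} {c : S × S → ℝ≥0∞} {δ : ℝ≥0∞}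
    (hc : ∀ a ∈ W, P (cyl2 a) ≤ c a * margY P (cyl a.2))
    (hδ : ∀ (η : Seq) (t : Finset (S × S)), (∀ a ∈ t, a ∈ W ∧ η ∈ cyl a.2) →
      Set.InjOn Prod.fst (t : Set (S × S)) → ∑ a ∈ t, c a ≤ δ) :
    P (⋃ a ∈ W, cyl2 a) ≤ δ := by
  classical
  let M : Set (S × S) := {a | a ∈ W ∧ a.2 ∈ minimals {y | (a.1, y) ∈ W}}
  have hsub : (⋃ a ∈ W, cyl2 a) ⊆ ⋃ a : M, cyl2 a := by
    intro ω hω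
    simp only [Set.mem_iUnion] at hω ⊢
    obtain ⟨a, haW, h1, h2⟩ := hω
    obtain ⟨y, hy, hω⟩ := exists_minimal (W := {y | (a.1, y) ∈ W}) haW h2
    exact ⟨⟨(a.1, y), hy.1, hy⟩, h1, hω⟩
  have hprob : IsProbabilityMeasure (margY P) :=
    Measure.isProbabilityMeasure_map measurable_snd.aemeasurable
  calc P (⋃ a ∈ W, cyl2 a) ≤ P (⋃ a : M, cyl2 a) := measure_mono hsub
    _ ≤ ∑' a : M, P (cyl2 a) := measure_iUnion_le _
    _ ≤ ∑' a : M, c a * margY P (cyl (a : S × S).2) := ENNReal.tsum_le_tsum fun a => hc a a.2.1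
    _ = ∑' a : M, ∫⁻ η, (cyl (a : S × S).2).indicator (fun _ => c a) η ∂margY P := by
        refine tsum_congr fun a => ?_
        rw [lintegral_indicator_const (measurableSet_cyl _)]
    _ = ∫⁻ η, ∑' a : M, (cyl (a : S × S).2).indicator (fun _ => c a) η ∂margY P := by
        rw [lintegral_tsum]
        exact fun a => (measurable_const.indicator (measurableSet_cyl _)).aemeasurable
    _ ≤ ∫⁻ _, δ ∂margY P := by
        refine lintegral_mono fun η => ?_
        simp only
        rw [ENNReal.tsum_eq_iSup_sum]
        refine iSup_le fun t => ?_
        let t' : Finset M := t.filter fun a : M => η ∈ cyl (a : S × S).2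
        have h1 : ∑ a ∈ t, (cyl (a : S × S).2).indicator (fun _ => c a) η =
            ∑ a ∈ t'.map (Function.Embedding.subtype _), c a := by
          rw [Finset.sum_map, Finset.sum_filter]
          exact Finset.sum_congr rfl fun a _ => by simp [Set.indicator_apply]
        rw [h1]
        have hmem : ∀ a ∈ t'.map (Function.Embedding.subtype _), a ∈ M ∧ η ∈ cyl a.2 := by
          intro a ha
          obtain ⟨b, hb, rfl⟩ := Finset.mem_map.1 ha
          exact ⟨b.2, (Finset.mem_filter.1 hb).2⟩
        refine hδ η _ (fun a ha => ⟨(hmem a ha).1.1, (hmem a ha).2⟩) ?_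
        rintro ⟨w, y⟩ ha ⟨w', y'⟩ hb (rfl : w = w')
        have h2 := hmem _ ha
        have h3 := hmem _ hb
        exact Prod.ext rfl (eq_of_mem_minimals h2.1.2 h3.1.2 h2.2 h3.2)
    _ = δ := by simp

theorem Admitted.measure_le {GB : ℕ → (ℕ × ℕ) × S → Option S} {GA : ℕ → (S × S) × ℕ → Option ℕ}
    {P : Measure (Seq × Seq)} [IsProbabilityMeasure P] {lo hi : ℕ → S × S → ℕ}
    (hlo : ∀ s a, (lo s a : ℝ) ≤ 2 ^ s * (P (cyl2 a)).toReal)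
    (hhi : ∀ s a, 2 ^ s * (P (cyl2 a)).toReal ≤ (hi s a : ℝ))
    {s n : ℕ} {a : S × S} (h : Admitted GB GA lo hi s (n, a)) :
    P (cyl2 a) ≤ ((claim GB GA s ((n, a.2), Encodable.encode a.1)).getD 0 : ℝ≥0∞) *
      2⁻¹ ^ (n + Encodable.encode a.1 + 3) * margY P (cyl a.2) := by
  obtain ⟨-, -, h⟩ := h
  simp only at h
  generalize (claim GB GA s ((n, a.2), Encodable.encode a.1)).getD 0 = c at h ⊢
  generalize n + Encodable.encode a.1 + 3 = K at h ⊢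
  have hfin : ∀ a, P a ≠ ⊤ := fun a => measure_ne_top P a
  rw [margY_cyl, ← ENNReal.toReal_le_toReal (hfin _) (ENNReal.mul_ne_top (ENNReal.mul_ne_top
    (by simp) (two_inv_pow_ne_top _)) (hfin _)), ENNReal.toReal_mul, ENNReal.toReal_mul]
  simp only [ENNReal.toReal_pow, ENNReal.toReal_inv, ENNReal.toReal_ofNat, ENNReal.toReal_natCast]
  have h0 : (hi s a : ℝ) * 2 ^ K < c * lo s ([], a.2) := by exact_mod_cast h
  have h1 := mul_le_mul_of_nonneg_right (hhi s a) (by positivity : (0 : ℝ) ≤ 2 ^ K)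
  have h2 := mul_le_mul_of_nonneg_left (hlo s ([], a.2)) (by positivity : (0 : ℝ) ≤ c)
  have h3 : (P (cyl2 a)).toReal * 2 ^ K ≤ c * (P (cyl2 ([], a.2))).toReal := by
    refine le_of_mul_le_mul_left ?_ (by positivity : (0 : ℝ) < 2 ^ s)
    linarith
  rw [inv_pow, ← div_eq_mul_inv, div_mul_eq_mul_div, le_div_iff₀ (by positivity)]
  exact h3

/-- The masses claimed above one point `η` add up to at most `2 * 2⁻ⁿ`: all of them are bounded by
the sum checked for the admitted string of largest code. -/
theorem sum_claim_le {GB : ℕ → (ℕ × ℕ) × S → Option S} {A : (S × S) × ℕ →. ℕ}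
    {GA : ℕ → (S × S) × ℕ → Option ℕ} (hGA : ∀ a b, b ∈ A a ↔ ∃ s, GA s a = some b)
    (hA : ∀ x y z k c, c ∈ A ((x, y), k) → y <+: z → c ∈ A ((x, z), k))
    {lo hi : ℕ → S × S → ℕ} {n : ℕ} {η : Seq} {t : Finset (S × S)} {σ : S × S → ℕ}
    (ht : ∀ a ∈ t, Admitted GB GA lo hi (σ a) (n, a) ∧ η ∈ cyl a.2)
    (hinj : Set.InjOn Prod.fst (t : Set (S × S))) :
    ∑ a ∈ t, ((claim GB GA (σ a) ((n, a.2), Encodable.encode a.1)).getD 0 : ℝ≥0∞) *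
      2⁻¹ ^ (n + Encodable.encode a.1 + 3) ≤ 2 * 2⁻¹ ^ n := by
  classical
  rcases t.eq_empty_or_nonempty with rfl | hne
  · simp
  obtain ⟨b, hb, hmax⟩ := t.exists_max_image (fun a => Encodable.encode a.1) hne
  obtain ⟨⟨hdef, hsum, -⟩, hηb⟩ := ht b hb
  set E := Encodable.encode b.1 with hE
  simp only at hdef hsum hmax
  have hval : ∀ a ∈ t, (claim GB GA (σ a) ((n, a.2), Encodable.encode a.1)).getD 0 =
      (claim GB GA (σ b) ((n, b.2), Encodable.encode a.1)).getD 0 := by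
    intro a ha
    obtain ⟨⟨hdefa, -, -⟩, hηa⟩ := ht a ha
    obtain ⟨c, hc⟩ := Option.isSome_iff_exists.1 (hdefa (Encodable.encode a.1) (by simp))
    obtain ⟨c', hc'⟩ := Option.isSome_iff_exists.1 (hdef (Encodable.encode a.1)
      (List.mem_range.2 (Nat.lt_succ_of_le (hmax a ha))))
    rw [hc, hc', claim_unique hGA hA hηa hηb hc hc']
  have hnat : ∑ a ∈ t, (claim GB GA (σ b) ((n, b.2), Encodable.encode a.1)).getD 0 *
      2 ^ (E - Encodable.encode a.1) ≤ 16 * 2 ^ E := by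
    refine le_trans ?_ hsum
    rw [← List.sum_toFinset _ List.nodup_range, List.toFinset_range]
    rw [← Finset.sum_image (g := fun a : S × S => Encodable.encode a.1)
      (f := fun e => (claim GB GA (σ b) ((n, b.2), e)).getD 0 * 2 ^ (E - e))]
    · refine Finset.sum_le_sum_of_subset fun e he => ?_
      obtain ⟨a, ha, rfl⟩ := Finset.mem_image.1 he
      exact Finset.mem_range.2 (Nat.lt_succ_of_le (hmax a ha))
    · exact fun a ha a' ha' h => hinj ha ha' (Encodable.encode_injective h)
  have hpow : ∀ j k : ℕ, (2 : ℝ≥0∞) ^ j * 2⁻¹ ^ (j + k) = 2⁻¹ ^ k := by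
    intro j k
    rw [pow_add, ← mul_assoc, ← mul_pow, ENNReal.mul_inv_cancel (by simp) (by simp), one_pow,
      one_mul]
  calc _ = ∑ a ∈ t, (((claim GB GA (σ b) ((n, b.2), Encodable.encode a.1)).getD 0 *
        2 ^ (E - Encodable.encode a.1) : ℕ) : ℝ≥0∞) * 2⁻¹ ^ (E + (n + 3)) := by
        refine Finset.sum_congr rfl fun a ha => ?_
        have hle := hmax a ha
        rw [hval a ha, Nat.cast_mul, mul_assoc]
        congr 1
        rw [← hpow (E - Encodable.encode a.1) (n + Encodable.encode a.1 + 3)]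
        push_cast
        congr 2
        omega
    _ ≤ ((16 * 2 ^ E : ℕ) : ℝ≥0∞) * 2⁻¹ ^ (E + (n + 3)) := by
        rw [← Finset.sum_mul, ← Nat.cast_sum]
        gcongr
    _ = 16 * 2⁻¹ ^ (n + 3) := by
        push_cast
        rw [mul_assoc, hpow]
    _ = 2 * 2⁻¹ ^ n := by
        rw [show (16 : ℝ≥0∞) = 2 * 2 ^ 3 by norm_num, mul_assoc, add_comm n 3, hpow]

/-! ### Admission along y∞ -/

theorem tendsto_lt_nat {u v : ℕ → ℕ} {a b : ℝ}
    (hu : Tendsto (fun s => (u s : ℝ) / 2 ^ s) atTop (nhds a))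
    (hv : Tendsto (fun s => (v s : ℝ) / 2 ^ s) atTop (nhds b)) {j k : ℕ}
    (h : a * j < k * b) : ∀ᶠ s in atTop, u s * j < k * v s := by
  filter_upwards [(hu.mul_const (j : ℝ)).eventually_lt (hv.const_mul (k : ℝ)) h] with s hs
  rw [div_mul_eq_mul_div, ← mul_div_assoc, div_lt_div_iff_of_pos_right (by positivity)] at hs
  exact_mod_cast hs

/-- A point of a test relative to `y∞` at level `n`, paired with `y∞`, is admitted at level `n`. -/
theorem exists_admitted {P : Measure (Seq × Seq)} {yinf xinf : Seq} {Q : Measure Seq}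
    [IsProbabilityMeasure Q]
    (hQ : ∀ x : S, Tendsto (fun m => condP P x (seqTake yinf m)) atTop
      (nhds ((Q (cyl x)).toReal)))
    {B : (ℕ × ℕ) × S →. S} {GB : ℕ → (ℕ × ℕ) × S → Option S}
    (hGBm : ∀ s t a b, s ≤ t → GB s a = some b → GB t a = some b)
    (hGB : ∀ a b, b ∈ B a ↔ ∃ s, GB s a = some b)
    {A : (S × S) × ℕ →. ℕ} {GA : ℕ → (S × S) × ℕ → Option ℕ}
    (hGAm : ∀ s t a b, s ≤ t → GA s a = some b → GA t a = some b)
    (hGA : ∀ a b, b ∈ A a ↔ ∃ s, GA s a = some b)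
    (hA : ∀ x y z k c, c ∈ A ((x, y), k) → y <+: z → c ∈ A ((x, z), k))
    (hAQ : ∀ x k, ∃ m c, c ∈ A ((x, seqTake yinf m), k) ∧
      (Q (cyl x)).toReal * 2 ^ k < c ∧ (c : ℝ) ≤ (Q (cyl x)).toReal * 2 ^ k + 3)
    {lo hi : ℕ → S × S → ℕ}
    (hlo : ∀ a, Tendsto (fun s => (lo s a : ℝ) / 2 ^ s) atTop (nhds (P (cyl2 a)).toReal))
    (hhi : ∀ a, Tendsto (fun s => (hi s a : ℝ) / 2 ^ s) atTop (nhds (P (cyl2 a)).toReal))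
    {n : ℕ} {V : Set S} (hV : V = {x | ∃ i m, x ∈ B ((i, n), seqTake yinf m)})
    (hVQ : Q (⋃ x ∈ V, cyl x) < 2⁻¹ ^ n) (hx : xinf ∈ ⋃ x ∈ V, cyl x) :
    ∃ a : S × S, (∃ s, Admitted GB GA lo hi s (n, a)) ∧ (xinf, yinf) ∈ cyl2 a := by
  classical
  have htake : ∀ {l m k : ℕ}, l ≤ m → l ≤ k →
      (seqTake yinf m).take l = (seqTake yinf k).take l := by
    intro l m k h1 h2
    rw [take_seqTake _ h1, take_seqTake _ h2]
  let pc : S → Prop := fun w => Piece GB (n, (w, seqTake yinf w.length))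
  have hpc : ∀ {w : S} {m : ℕ}, w.length ≤ m → (Piece GB (n, (w, seqTake yinf m)) ↔ pc w) :=
    fun h => piece_congr (htake h le_rfl)
  have hpcV : ∀ w, pc w → cyl w ⊆ ⋃ x ∈ V, cyl x := by
    rintro w ⟨⟨j, hj, i, -, x, hx, hxw⟩, -⟩ ω hω
    refine Set.mem_biUnion (x := x) ?_ (cyl_subset (show x <+: w from hxw) hω)
    rw [hV]
    refine ⟨i, j, (hGB _ _).2 ⟨w.length, ?_⟩⟩
    simp only at hj hx
    rw [← hx, take_seqTake _ (Nat.lt_succ_iff.1 hj)]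
  have hpceq : ∀ {w w' : S} {ω : Seq}, pc w → pc w' → ω ∈ cyl w → ω ∈ cyl w' → w = w' := by
    have key : ∀ {w w' : S} {ω : Seq}, w.length ≤ w'.length → pc w → pc w' → ω ∈ cyl w →
        ω ∈ cyl w' → w = w' := fun hl h h' hω hω' =>
      piece_eq_of_prefix hGBm (prefix_of_mem_cyl hω hω' hl) ((hpc hl).2 h) h'
    intro w w' ω h h' hω hω'
    rcases le_total w.length w'.length with hl | hl
    · exact key hl h h' hω hω'
    · exact (key hl h' h hω' hω).symm
  -- The piece containing `x∞` is its shortest prefix with `Hit`.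
  obtain ⟨w₀, hw₀, hxw₀⟩ : ∃ w, pc w ∧ xinf ∈ cyl w := by
    have hex : ∃ L, Hit GB (n, (seqTake xinf L, seqTake yinf L)) := by
      simp only [Set.mem_iUnion, hV] at hx
      obtain ⟨x, ⟨i, m, hxB⟩, hx⟩ := hx
      obtain ⟨s, hs⟩ := (hGB _ _).1 hxB
      refine ⟨max (max i m) (max s x.length), m, by simp, i, by simp, x, ?_, ?_⟩
      · simp only [length_seqTake]
        rw [take_seqTake _ (by omega)]
        exact hGBm _ _ _ _ (by omega) hs
      · exact prefix_seqTake_iff.2 ⟨hx, by omega⟩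
    refine ⟨seqTake xinf (Nat.find hex), ⟨?_, ?_⟩, mem_cyl_seqTake _ _⟩
    · simpa using Nat.find_spec hex
    · rcases Nat.eq_zero_or_pos (Nat.find hex) with h0 | h0
      · left; simp [h0]
      · right
        simp only [length_seqTake]
        rw [take_seqTake _ (by omega), hit_congr (y' := seqTake yinf (Nat.find hex - 1))]
        · exact Nat.find_min hex (by omega)
        · rw [length_seqTake]; exact htake (by omega) le_rfl
  -- `D e` is the cylinder of the piece with code `e`, or empty if there is none.
  let D : ℕ → Set Seq := fun e => {ω | ∃ w, Encodable.encode w = e ∧ pc w ∧ ω ∈ cyl w}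
  have hDpc : ∀ w, pc w → D (Encodable.encode w) = cyl w := by
    intro w hw
    ext ω
    constructor
    · rintro ⟨w', he, -, hω⟩
      rwa [Encodable.encode_injective he] at hω
    · exact fun hω => ⟨w, rfl, hw, hω⟩
  have hDempty : ∀ e, (∀ w, Encodable.encode w = e → ¬ pc w) → D e = ∅ := by
    intro e h
    ext ω
    simp only [Set.mem_empty_iff_false, iff_false]
    rintro ⟨w, he, hw, -⟩
    exact h w he hw
  have hDsum : ∀ t : Finset ℕ, ∑ e ∈ t, (Q (D e)).toReal ≤ (2⁻¹ : ℝ) ^ n := by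
    intro t
    rw [← ENNReal.toReal_sum fun _ _ => measure_ne_top Q _, ← measure_biUnion_finset]
    · have h1 : Q (⋃ e ∈ t, D e) ≤ 2⁻¹ ^ n := by
        refine le_trans (measure_mono (Set.iUnion₂_subset fun e _ => ?_)) hVQ.le
        rintro ω ⟨w, -, hw, hω⟩
        exact hpcV w hw hω
      simpa using ENNReal.toReal_mono (two_inv_pow_ne_top n) h1
    · intro e _ e' _ hne
      refine Set.disjoint_left.2 fun ω h1 h2 => hne ?_
      obtain ⟨w, rfl, hw, hω⟩ := h1
      obtain ⟨w', rfl, hw', hω'⟩ := h2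
      rw [hpceq hw hw' hω hω']
    · intro e _
      by_cases h : ∃ w, Encodable.encode w = e ∧ pc w
      · obtain ⟨w, rfl, hw⟩ := h
        rw [hDpc w hw]; exact measurableSet_cyl w
      · rw [hDempty e fun w he hw => h ⟨w, he, hw⟩]; exact MeasurableSet.empty
  -- Along `y∞` all claims are eventually defined and are rounded values of `Q` on the pieces.
  have hclaim : ∀ e, ∃ c : ℕ, (∀ᶠ m in atTop, ∀ᶠ s in atTop,
      claim GB GA s ((n, seqTake yinf m), e) = some c) ∧
      (c : ℝ) ≤ (Q (D e)).toReal * 2 ^ (n + e + 3) + 3 ∧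
      ∀ w, Encodable.encode w = e → pc w → (Q (D e)).toReal * 2 ^ (n + e + 3) < c := by
    intro e
    rcases hd : Encodable.decode₂ S e with _ | w
    · refine ⟨0, Eventually.of_forall fun m => Eventually.of_forall fun s =>
        claim_of_decode_none hd, by push_cast; positivity, fun w he _ => ?_⟩
      rw [← he, Encodable.decode₂_encode] at hd
      cases hd
    · have he := Encodable.decode₂_eq_some.1 hd
      subst he
      by_cases hw : pc w
      · obtain ⟨m, c, hc, h1, h2⟩ := hAQ w (n + Encodable.encode w + 3)
        rw [hDpc w hw]
        refine ⟨c, ?_, h2, fun _ _ _ => h1⟩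
        filter_upwards [eventually_ge_atTop (max m w.length)] with m' hm'
        obtain ⟨s, hs⟩ := (hGA _ _).1 (hA _ _ _ _ _ hc
          (seqTake_prefix yinf ((le_max_left _ _).trans hm')))
        filter_upwards [eventually_ge_atTop s] with s' hs'
        have hl : w.length ≤ m' := (le_max_right _ _).trans hm'
        rw [claim_encode (by simpa using hl) ((hpc hl).2 hw)]
        exact hGAm _ _ _ _ hs' hs
      · refine ⟨0, ?_, by push_cast; positivity, fun w' he' hw' => ?_⟩
        · filter_upwards [eventually_ge_atTop w.length] with m hm
          exact Eventually.of_forall fun s =>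
            claim_encode_not (by simpa using hm) fun h => hw ((hpc hm).1 h)
        · rw [Encodable.encode_injective he'] at hw'
          exact absurd hw' hw
  choose c hc hcle hclt using hclaim
  set E := Encodable.encode w₀ with hE
  -- The pieces have total mass below `2⁻ⁿ`, and rounding adds at most `3 * 2⁻ⁿ⁻ᵉ⁻³` at code `e`.
  have hsum : ∑ e ∈ Finset.range (E + 1), c e * 2 ^ (E - e) ≤ 16 * 2 ^ E := by
    have h1 : ∑ e ∈ Finset.range (E + 1), (c e : ℝ) * 2 ^ (E - e) ≤
        2 ^ (E + n + 3) * ∑ e ∈ Finset.range (E + 1), (Q (D e)).toReal +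
          3 * ∑ e ∈ Finset.range (E + 1), (2 : ℝ) ^ (E - e) := by
      rw [Finset.mul_sum, Finset.mul_sum, ← Finset.sum_add_distrib]
      refine Finset.sum_le_sum fun e he => ?_
      have hle : e ≤ E := Nat.lt_succ_iff.1 (Finset.mem_range.1 he)
      have h2 : (2 : ℝ) ^ (E + n + 3) = 2 ^ (n + e + 3) * 2 ^ (E - e) := by
        rw [← pow_add]; congr 1; omega
      have h3 := mul_le_mul_of_nonneg_right (hcle e) (by positivity : (0 : ℝ) ≤ 2 ^ (E - e))
      rw [h2]
      linarith
    have h2 : ∑ e ∈ Finset.range (E + 1), (2 : ℝ) ^ (E - e) ≤ 2 * 2 ^ E := by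
      have h3 := Finset.sum_range_reflect (fun j => (2 : ℝ) ^ j) (E + 1)
      simp only [Nat.add_sub_cancel] at h3
      rw [h3, geom_sum_eq (by norm_num)]
      rw [pow_succ]; linarith
    have h3 : (2 : ℝ) ^ (E + n + 3) * ∑ e ∈ Finset.range (E + 1), (Q (D e)).toReal ≤ 8 * 2 ^ E := by
      refine (mul_le_mul_of_nonneg_left (hDsum _) (by positivity)).trans_eq ?_
      rw [pow_add, pow_add, inv_pow]
      field_simp
      norm_num
    have h4 : (0 : ℝ) ≤ 2 ^ E := by positivity
    have h5 : ∑ e ∈ Finset.range (E + 1), (c e : ℝ) * 2 ^ (E - e) ≤ 16 * 2 ^ E := by linarith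
    exact_mod_cast h5
  -- `P(w₀|y) → Q(w₀)` along `y∞`, and `Q(w₀)` is strictly below the claimed mass.
  have hcond : ∀ᶠ m in atTop, condP P w₀ (seqTake yinf m) < (c E : ℝ) / 2 ^ (n + E + 3) := by
    refine (hQ w₀).eventually_lt_const ?_
    rw [lt_div_iff₀ (by positivity), ← hDpc w₀ hw₀]
    exact hclt E w₀ rfl hw₀
  have hpos : ∀ᶠ m in atTop, 0 < condP P [] (seqTake yinf m) := by
    refine (hQ []).eventually_const_lt ?_
    simp
  obtain ⟨m, hm1, hm2, hm3⟩ := ((hcond.and (hpos.and ((Finset.range (E + 1)).eventually_all.2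
    fun e _ => hc e))).exists)
  have hlt : (P (cyl2 (w₀, seqTake yinf m))).toReal * (2 ^ (n + E + 3) : ℕ) <
      c E * (P (cyl2 ([], seqTake yinf m))).toReal := by
    rw [condP_eq] at hm1 hm2
    have h0 : 0 < (P (cyl2 ([], seqTake yinf m))).toReal := by
      refine lt_of_le_of_ne ENNReal.toReal_nonneg fun h => ?_
      rw [← h] at hm2
      simp at hm2
    rw [div_lt_div_iff₀ h0 (by positivity)] at hm1
    push_cast
    exact hm1
  obtain ⟨s, hs1, hs2⟩ := ((tendsto_lt_nat (hhi _) (hlo _) hlt).and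
    ((Finset.range (E + 1)).eventually_all.2 hm3)).exists
  refine ⟨(w₀, seqTake yinf m), ⟨s, ?_, ?_, ?_⟩, hxw₀, mem_cyl_seqTake _ _⟩
  · intro e he
    simp only
    rw [hs2 e (by simpa using he)]; rfl
  · simp only [← hE]
    rw [← List.sum_toFinset _ List.nodup_range, List.toFinset_range]
    refine le_trans (Finset.sum_le_sum fun e he => ?_) hsum
    rw [hs2 e he, Option.getD_some]
  · simp only [← hE]
    rw [hs2 E (by simp), Option.getD_some]
    exact hs1

/-! ### Extension of a test over y∞ to a test for P -/

/-- Rounding up turns the approximation of `P(·|y∞)` into claims in units of `2⁻ᵏ` that strictly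
exceed the true value by at most `3 * 2⁻ᵏ`. -/
theorem exists_rounded {P : Measure (Seq × Seq)} {yinf : Seq} {Q : Measure Seq}
    (hQ : ∀ x : S, Tendsto (fun m => condP P x (seqTake yinf m)) atTop
      (nhds ((Q (cyl x)).toReal)))
    (hcc : CondComputableAt P yinf) :
    ∃ A : (S × S) × ℕ →. ℕ, Partrec A ∧
      (∀ x y z k c, c ∈ A ((x, y), k) → y <+: z → c ∈ A ((x, z), k)) ∧
      ∀ x k, ∃ m c, c ∈ A ((x, seqTake yinf m), k) ∧
        (Q (cyl x)).toReal * 2 ^ k < c ∧ (c : ℝ) ≤ (Q (cyl x)).toReal * 2 ^ k + 3 := by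
  obtain ⟨A, hA, hAm, hAQ⟩ := hcc
  refine ⟨fun a => (A (a.1, 2 ^ a.2)).map fun q => q.num.toNat * 2 ^ a.2 / q.den + 2, ?_, ?_, ?_⟩
  · refine Partrec.map (hA.comp (Computable.fst.pair
      ((primrec_pow.comp (Primrec.const 2) Primrec.snd).to_comp))) ?_
    refine Primrec.succ.to_comp.comp (Primrec.succ.to_comp.comp (computable_round.comp
      Computable.snd ?_))
    exact (primrec_pow.comp (Primrec.const 2) (Primrec.snd.comp Primrec.fst)).to_comp
  · intro x y z k c hc hyz
    obtain ⟨q, hq, rfl⟩ := (Part.mem_map_iff _).1 hc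
    exact (Part.mem_map_iff _).2 ⟨q, hAm _ _ _ _ _ hq hyz, rfl⟩
  · intro x k
    obtain ⟨m, q, hq, hlt⟩ := hAQ x (2 ^ k) (by positivity)
    refine ⟨m, _, (Part.mem_map_iff _).2 ⟨q, hq, rfl⟩, ?_⟩
    rw [show condPLim P x yinf = (Q (cyl x)).toReal from (hQ x).limUnder_eq] at hlt
    obtain ⟨h1, h2⟩ := round_bounds q (2 ^ k)
    simp only
    push_cast at h1 h2 hlt ⊢
    have hk : (0 : ℝ) < 2 ^ k := by positivity
    obtain ⟨h3, h4⟩ := abs_lt.1 hlt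
    have h5 : (Q (cyl x)).toReal * 2 ^ k - q * 2 ^ k < 1 := by
      rw [← sub_mul, ← lt_div_iff₀ hk]; exact h4
    have h6 : max (q : ℝ) 0 * 2 ^ k ≤ (Q (cyl x)).toReal * 2 ^ k + 1 := by
      have h7 : max (q : ℝ) 0 ≤ (Q (cyl x)).toReal + 1 / 2 ^ k := by
        refine max_le (by linarith) (by positivity)
      refine (mul_le_mul_of_nonneg_right h7 hk.le).trans_eq ?_
      field_simp
    constructor <;> linarith

/-- A test for `P(·|y∞)` relative to `y∞` extends to a test for `P`. A level for `P` admits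
`Δ(w, y)` once the oracle part `y` has produced upper approximations of the masses of the first
pieces of the level over `y∞` with sum at most `2 * 2⁻ⁿ` and `P(w|y)` is below the one for `w`.
Over false oracles the same check keeps the total mass bounded; over `y∞` every piece passes. -/
theorem relMLRandom_of_random2 {P : Measure (Seq × Seq)} (hP : ComputableProb2 P)
    {yinf : Seq} {Q : Measure Seq} [IsProbabilityMeasure Q]
    (hQ : ∀ x : S, Tendsto (fun m => condP P x (seqTake yinf m)) atTop
      (nhds ((Q (cyl x)).toReal)))
    (hcc : CondComputableAt P yinf) {xinf : Seq} (hx : Random2 P (xinf, yinf)) :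
    RelMLRandom Q yinf xinf := by
  rintro U ⟨⟨B, hB, -, hUB⟩, -, hUQ⟩ hmem
  have hprob : IsProbabilityMeasure P := hP.1
  obtain ⟨lo, hi, hlo, hhi, hloP, hhiP, hlot, hhit⟩ := exists_dyadic_bounds hP
  obtain ⟨A, hA, hAm, hAQ⟩ := exists_rounded hQ hcc
  obtain ⟨GB, hGB, hGBm, hGBB⟩ := exists_stage hB
  obtain ⟨GA, hGA, hGAm, hGAA⟩ := exists_stage hA
  refine not_mlRandom_of_frequently
    (W := {a | ∃ s, Admitted GB GA lo hi s a}) (reSet_of_primrec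
      (primrecRel_admitted hGB hGA hlo hhi)) (fun n => ?_) (fun N => ⟨N, le_rfl, ?_⟩) hx
  · have hex : ∀ a : S × S, ∃ s, (∃ s', Admitted GB GA lo hi s' (n, a)) →
        Admitted GB GA lo hi s (n, a) := by
      intro a
      by_cases h : ∃ s', Admitted GB GA lo hi s' (n, a)
      · obtain ⟨s, hs⟩ := h
        exact ⟨s, fun _ => hs⟩
      · exact ⟨0, fun h' => absurd h' h⟩
    choose σ hσ using hex
    exact measure_biUnion_le_of_fibre (W := {a | ∃ s, Admitted GB GA lo hi s (n, a)})
      (fun a ha => (hσ a ha).measure_le hloP hhiP)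
      fun η t ht hinj => sum_claim_le hGAA hAm (fun a ha => ⟨hσ a (ht a ha).1, (ht a ha).2⟩) hinj
  · obtain ⟨a, ha, hω⟩ := exists_admitted hQ hGBm hGBB hGAm hGAA hAm hAQ hlot hhit (hUB N) (hUQ N)
      (Set.mem_iInter.1 hmem N)
    exact mem_testUnion.2 ⟨a, ha, hω⟩

/-- Theorem 4, van Lambalgen's theorem for correlated probability:
if P is computable on Ω², yinf ∈ R^{P_Y}, Q is the conditional probability measure
P(·|yinf) (its cylinder values are the limits of P(x|y) along prefixes y of yinf),
and P(·|yinf) is computable relative to yinf, then for every xinf,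
xinf ∈ R^{P(·|yinf),yinf} ⟺ (xinf,yinf) ∈ R^P. -/
theorem van_lambalgen (P : Measure (Seq × Seq)) (hP : ComputableProb2 P)
    (yinf : Seq) (hy : Random1 (margY P) yinf)
    (Q : Measure Seq) (hQp : IsProbabilityMeasure Q)
    (hQ : ∀ x : S, Tendsto (fun m => condP P x (seqTake yinf m)) atTop
      (nhds ((Q (cyl x)).toReal)))
    (hcc : CondComputableAt P yinf) :
    ∀ xinf : Seq, RelMLRandom Q yinf xinf ↔ Random2 P (xinf, yinf) := by
  intro xinf
  exact ⟨fun h => random2_of_relMLRandom hP hy hQ h, fun h => relMLRandom_of_random2 hP hQ hcc h⟩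

end AlgRand
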